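/- arXiv:1606.09010 — 11 statements merged into one kernel-verified Lean document; each statement's English description precedes it below -/
import Mathlib

section
/- Let n ≥ 1 and let α be a primitive isotropic element of the generalized Kummer lattice Λ_n. If d = Div(α) denotes the divisibility of α, then d² divides n + 1. -/
/-- The Beauville–Bogomolov form of the generalized Kummer lattice
`Λ_n = U^{⊕3} ⊕ ⟨-(2n+2)⟩`, as a bilinear form on `ℤ⁷`. -/
def kummerForm (n : ℕ) (x y : Fin 7 → ℤ) : ℤ :=
  x 0 * y 1 + x 1 * y 0 + x 2 * y 3 + x 3 * y 2 + x 4 * y 5 + x 5 * y 4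
    - (2 * (n : ℤ) + 2) * (x 6 * y 6)

/-- An element of `ℤ^m` is primitive if the gcd of its coordinates is `1`. -/
def IsPrimitive {m : ℕ} (x : Fin m → ℤ) : Prop :=
  Finset.univ.gcd x = 1

/-- `d` is the divisibility `Div(x)` of `x` with respect to the bilinear form `B`,
i.e. the positive generator of the ideal `{B x y : y}` of `ℤ`. -/
def IsDivisibility {m : ℕ} (B : (Fin m → ℤ) → (Fin m → ℤ) → ℤ)
    (x : Fin m → ℤ) (d : ℤ) : Prop :=
  0 < d ∧ (∀ y, d ∣ B x y) ∧ ∀ e : ℤ, (∀ y, e ∣ B x y) → e ∣ d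

theorem stmt0 (n : ℕ) (hn : 1 ≤ n) (α : Fin 7 → ℤ)
    (hprim : IsPrimitive α) (hiso : kummerForm n α α = 0)
    (d : ℤ) (hd : IsDivisibility (kummerForm n) α d) :
    d ^ 2 ∣ (n : ℤ) + 1 := by
  obtain ⟨-, hdiv, -⟩ := hd
  have h0 : d ∣ α 0 := by simpa [kummerForm, Pi.single_apply] using hdiv (Pi.single 1 1)
  have h1 : d ∣ α 1 := by simpa [kummerForm, Pi.single_apply] using hdiv (Pi.single 0 1)
  have h2 : d ∣ α 2 := by simpa [kummerForm, Pi.single_apply] using hdiv (Pi.single 3 1)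
  have h3 : d ∣ α 3 := by simpa [kummerForm, Pi.single_apply] using hdiv (Pi.single 2 1)
  have h4 : d ∣ α 4 := by simpa [kummerForm, Pi.single_apply] using hdiv (Pi.single 5 1)
  have h5 : d ∣ α 5 := by simpa [kummerForm, Pi.single_apply] using hdiv (Pi.single 4 1)
  have hcop : IsCoprime d (α 6) := by
    rw [Int.isCoprime_iff_gcd_eq_one]
    have hg : ((Int.gcd d (α 6) : ℕ) : ℤ) ∣ Finset.univ.gcd α := by
      apply Finset.dvd_gcd
      intro i _
      have hgd : ((Int.gcd d (α 6) : ℕ) : ℤ) ∣ d := Int.gcd_dvd_left ..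
      fin_cases i
      · exact hgd.trans h0
      · exact hgd.trans h1
      · exact hgd.trans h2
      · exact hgd.trans h3
      · exact hgd.trans h4
      · exact hgd.trans h5
      · exact Int.gcd_dvd_right ..
    rw [show Finset.univ.gcd α = 1 from hprim] at hg
    have := Int.natCast_dvd_natCast.mp (by simpa using hg : ((Int.gcd d (α 6) : ℕ) : ℤ) ∣ ((1 : ℕ) : ℤ))
    exact Nat.dvd_one.mp this
  have hcop2 : IsCoprime (d ^ 2) (α 6 ^ 2) := hcop.pow
  apply hcop2.dvd_of_dvd_mul_right
  have hEq : ((n : ℤ) + 1) * α 6 ^ 2 = α 0 * α 1 + α 2 * α 3 + α 4 * α 5 := by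
    unfold kummerForm at hiso
    linarith
  rw [hEq, sq]
  exact dvd_add (dvd_add (mul_dvd_mul h0 h1) (mul_dvd_mul h2 h3)) (mul_dvd_mul h4 h5)
end

section
/- Let n ≥ 1 and let α be a primitive isotropic element of the generalized Kummer lattice Λ_n. Write α = α₀ + b·δ with α₀ in the U^{⊕3} summand (the first six coordinates) and b ∈ ℤ. Then α₀ ≠ 0, and if a > 0 denotes the gcd of the coordinates of α₀, so that α₀ = a·ξ with ξ primitive in U^{⊕3}, then gcd(a,b) = 1 and Div(α) = a. -/
/-- Writing `α = α₀ + b·δ` with `α₀` in the `U^{⊕3}` summand (first six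
coordinates) and `b = α 6`: then `α₀ ≠ 0`, and if `α₀ = a·ξ` with `a > 0` and
`ξ` primitive in `U^{⊕3}` (so `a` is the gcd of the coordinates of `α₀`), then
`gcd(a, b) = 1` and `Div(α) = a`. -/
theorem stmt1 (n : ℕ) (hn : 1 ≤ n) (α : Fin 7 → ℤ)
    (hprim : IsPrimitive α) (hiso : kummerForm n α α = 0)
    (α₀ : Fin 7 → ℤ) (hα₀ : α₀ = fun i => if i = 6 then 0 else α i) :
    α₀ ≠ 0 ∧
      ∀ (a : ℤ) (ξ : Fin 7 → ℤ), 0 < a → IsPrimitive ξ → ξ 6 = 0 →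
        α₀ = a • ξ →
          IsCoprime a (α 6) ∧ IsDivisibility (kummerForm n) α a := by
  have hb : α₀ 6 = 0 := by simp [hα₀]
  have hc : ∀ i, i ≠ 6 → α₀ i = α i := by
    intro i hi
    simp [hα₀, hi]
  have hα : ∀ d : ℤ, (∀ i, d ∣ α i) → d ∣ 1 := by
    intro d hd
    have h : Finset.univ.gcd α = 1 := hprim
    rw [← h]
    exact Finset.dvd_gcd fun i _ => hd i
  have hiso' : 2 * (α 0 * α 1 + α 2 * α 3 + α 4 * α 5) = (2 * (n : ℤ) + 2) * (α 6 * α 6) := by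
    unfold kummerForm at hiso
    linarith
  refine ⟨?_, ?_⟩
  · intro h0
    have hz : ∀ i, i ≠ 6 → α i = 0 := by
      intro i hi
      rw [← hc i hi, h0]
      rfl
    rw [hz 0 (by decide), hz 2 (by decide), hz 4 (by decide)] at hiso'
    have h6 : α 6 = 0 := by
      have hpos : (2 * (n : ℤ) + 2) ≠ 0 := by positivity
      have : α 6 * α 6 = 0 := by
        have := hiso'.symm
        simpa [hpos] using this
      exact mul_self_eq_zero.mp this
    have := hα 0 (by
      intro i
      by_cases hi : i = 6
      · rw [hi, h6]
      · rw [hz i hi])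
    norm_num at this
  · intro a ξ ha hξ hξ6 hα₀ξ
    have hx : ∀ i, i ≠ 6 → α i = a * ξ i := by
      intro i hi
      rw [← hc i hi, hα₀ξ]
      simp
    have hcop : IsCoprime a (α 6) := by
      rw [Int.isCoprime_iff_gcd_eq_one]
      have := hα (Int.gcd a (α 6)) (by
        intro i
        by_cases hi : i = 6
        · rw [hi]
          exact Int.gcd_dvd_right _ _
        · rw [hx i hi]
          exact Dvd.dvd.mul_right (Int.gcd_dvd_left _ _) _)
      exact_mod_cast Int.eq_one_of_dvd_one (by positivity) this
    refine ⟨hcop, ha, ?_, ?_⟩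
    · have hd : a ∣ (n : ℤ) + 1 := by
        have h1 : a ∣ ((n : ℤ) + 1) * (α 6 * α 6) := by
          refine ⟨ξ 0 * α 1 + ξ 2 * α 3 + ξ 4 * α 5, ?_⟩
          rw [hx 0 (by decide), hx 2 (by decide), hx 4 (by decide)] at hiso'
          linarith
        exact (hcop.mul_right hcop).dvd_of_dvd_mul_right h1
      obtain ⟨k, hk⟩ := hd
      intro y
      unfold kummerForm
      rw [hx 0 (by decide), hx 1 (by decide), hx 2 (by decide), hx 3 (by decide),
        hx 4 (by decide), hx 5 (by decide)]
      refine ⟨ξ 0 * y 1 + ξ 1 * y 0 + ξ 2 * y 3 + ξ 3 * y 2 + ξ 4 * y 5 + ξ 5 * y 4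
        - 2 * k * (α 6 * y 6), ?_⟩
      linear_combination (-2 * (α 6 * y 6)) * hk
    · intro e he
      have hi : ∀ i, e ∣ a * ξ i := by
        intro i
        by_cases h6 : i = 6
        · rw [h6, hξ6]
          simp
        rw [← hx i h6]
        have e0 := he (Pi.single 0 1)
        have e1 := he (Pi.single 1 1)
        have e2 := he (Pi.single 2 1)
        have e3 := he (Pi.single 3 1)
        have e4 := he (Pi.single 4 1)
        have e5 := he (Pi.single 5 1)
        simp [kummerForm, Pi.single_apply] at e0 e1 e2 e3 e4 e5
        fin_cases i <;> first | assumption | exact absurd rfl h6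
      have h : Finset.univ.gcd ξ = 1 := hξ
      have h2 : e ∣ Finset.univ.gcd fun i => a * ξ i := Finset.dvd_gcd fun i _ => hi i
      rw [Finset.gcd_mul_left, h, mul_one] at h2
      exact h2.trans (normalize_dvd_iff.mpr dvd_rfl)
end

section
/- Let n ≥ 1 and let ι : Λ_n → Λ̃ be a primitive isometric embedding of the generalized Kummer lattice into the Mukai lattice. Then the orthogonal complement ι(Λ_n)^⊥ = {x ∈ Λ̃ : (x, ι(y)) = 0 for all y ∈ Λ_n} is a free abelian group of rank 1, generated by a primitive element v with (v,v) = 2n + 2. -/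
/-- The Mukai form of the Mukai lattice `Λ̃ = U^{⊕4}`, as a bilinear form on `ℤ⁸`. -/
def mukaiForm (x y : Fin 8 → ℤ) : ℤ :=
  x 0 * y 1 + x 1 * y 0 + x 2 * y 3 + x 3 * y 2 + x 4 * y 5 + x 5 * y 4
    + x 6 * y 7 + x 7 * y 6

/-- `ι : Λ_n → Λ̃` is a primitive isometric embedding: injective, preserving the
bilinear forms, and with saturated image (torsion-free quotient). -/
def IsPrimitiveIsometricEmbedding (n : ℕ)
    (ι : (Fin 7 → ℤ) →ₗ[ℤ] (Fin 8 → ℤ)) : Prop :=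
  Function.Injective ι ∧ (∀ x y, mukaiForm (ι x) (ι y) = kummerForm n x y) ∧
    ∀ (k : ℤ) (x : Fin 8 → ℤ), k ≠ 0 → k • x ∈ LinearMap.range ι →
      x ∈ LinearMap.range ι

theorem mukai_add_left (x y z : Fin 8 → ℤ) :
    mukaiForm (x + y) z = mukaiForm x z + mukaiForm y z := by
  simp only [mukaiForm, Pi.add_apply]; ring

theorem mukai_smul_left (k : ℤ) (x z : Fin 8 → ℤ) :
    mukaiForm (k • x) z = k * mukaiForm x z := by
  simp only [mukaiForm, Pi.smul_apply, smul_eq_mul]; ring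

theorem mukai_comm (x z : Fin 8 → ℤ) : mukaiForm x z = mukaiForm z x := by
  simp only [mukaiForm]; ring

theorem mukai_even (x : Fin 8 → ℤ) : ∃ c, mukaiForm x x = 2 * c :=
  ⟨x 0 * x 1 + x 2 * x 3 + x 4 * x 5 + x 6 * x 7, by simp only [mukaiForm]; ring⟩

/-- Every functional on the Mukai lattice is represented by a vector. -/
theorem mukai_repr (f : (Fin 8 → ℤ) →ₗ[ℤ] ℤ) :
    ∃ u, ∀ x, mukaiForm u x = f x := by
  refine ⟨![f (Pi.single 1 1), f (Pi.single 0 1), f (Pi.single 3 1), f (Pi.single 2 1),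
    f (Pi.single 5 1), f (Pi.single 4 1), f (Pi.single 7 1), f (Pi.single 6 1)], fun x => ?_⟩
  rw [LinearMap.pi_apply_eq_sum_univ f x]
  have h : ∀ i : Fin 8, (fun j => if i = j then (1 : ℤ) else 0) = Pi.single i 1 := by
    intro i; ext j; simp [Pi.single_apply, eq_comm]
  simp [Fin.sum_univ_eight, mukaiForm, h]
  ring

/-- Splitting of the quotient by a saturated rank seven sublattice. -/
theorem exists_split (ι : (Fin 7 → ℤ) →ₗ[ℤ] (Fin 8 → ℤ)) (hi : Function.Injective ι)
    (hs : ∀ (k : ℤ) (x : Fin 8 → ℤ), k ≠ 0 → k • x ∈ LinearMap.range ι →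
      x ∈ LinearMap.range ι) :
    ∃ (f : (Fin 8 → ℤ) →ₗ[ℤ] ℤ) (b : Fin 8 → ℤ), f b = 1 ∧
      ∀ x, f x = 0 ↔ x ∈ LinearMap.range ι := by
  have tf : Module.IsTorsionFree ℤ ((Fin 8 → ℤ) ⧸ LinearMap.range ι) := by
    refine Module.IsTorsionFree.of_smul_eq_zero fun k q h => ?_
    obtain ⟨x, rfl⟩ := Submodule.mkQ_surjective _ q
    by_cases hk : k = 0
    · exact Or.inl hk
    · right
      rw [← map_smul] at h
      simp only [Submodule.mkQ_apply, Submodule.Quotient.mk_eq_zero] at h ⊢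
      exact hs k x hk h
  have hr := Submodule.finrank_quotient_add_finrank (LinearMap.range ι)
  rw [LinearMap.finrank_range_of_inj hi] at hr
  simp only [Module.finrank_fintype_fun_eq_card, Fintype.card_fin] at hr
  let e : ((Fin 8 → ℤ) ⧸ LinearMap.range ι) ≃ₗ[ℤ] ℤ :=
    LinearEquiv.ofFinrankEq _ _ (by rw [Module.finrank_self]; omega)
  obtain ⟨b, hb⟩ := Submodule.mkQ_surjective _ (e.symm 1)
  refine ⟨e.toLinearMap ∘ₗ (LinearMap.range ι).mkQ, b, ?_, fun x => ?_⟩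
  · simp only [LinearMap.comp_apply, hb]; simp
  · simp

/-- The orthogonal complement of the image of a primitive isometric embedding
`Λ_n ↪ Λ̃` is free of rank one, generated by a primitive `v` with `(v,v) = 2n+2`. -/
theorem stmt2 (n : ℕ) (hn : 1 ≤ n) (ι : (Fin 7 → ℤ) →ₗ[ℤ] (Fin 8 → ℤ))
    (hι : IsPrimitiveIsometricEmbedding n ι) :
    ∃ v : Fin 8 → ℤ, IsPrimitive v ∧ mukaiForm v v = 2 * (n : ℤ) + 2 ∧
      ∀ x : Fin 8 → ℤ, (∀ y, mukaiForm x (ι y) = 0) ↔ ∃ k : ℤ, x = k • v := by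
  obtain ⟨hi, hB, hs⟩ := hι
  obtain ⟨f, b₀, hb₀, hf⟩ := exists_split ι hi hs
  have hfι : ∀ y, f (ι y) = 0 := fun y => (hf _).2 ⟨y, rfl⟩
  -- adjust the complement vector to be orthogonal to the hyperbolic planes
  obtain ⟨b, m, hb, hbι⟩ : ∃ (b : Fin 8 → ℤ) (m : ℤ), f b = 1 ∧
      ∀ y, mukaiForm b (ι y) = m * y 6 := by
    let a : Fin 7 → ℤ := fun i => mukaiForm b₀ (ι (Pi.single i 1))
    have ha : ∀ y, mukaiForm b₀ (ι y) = ∑ i, y i * a i := by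
      intro y
      have h : ι y = ∑ i, y i • ι (Pi.single i 1) := by
        conv_lhs => rw [LinearMap.pi_apply_eq_sum_univ ι y]
        refine Finset.sum_congr rfl fun i _ => ?_
        congr 2; ext j; simp [Pi.single_apply, eq_comm]
      rw [h]
      simp only [a, Fin.sum_univ_seven]
      simp only [mukai_comm b₀, mukai_add_left, mukai_smul_left]
    refine ⟨b₀ + (-1 : ℤ) • ι ![a 1, a 0, a 3, a 2, a 5, a 4, 0], a 6, ?_, fun y => ?_⟩
    · simp [hb₀, hfι]
    · rw [mukai_add_left, mukai_smul_left, hB, ha]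
      simp [kummerForm, Fin.sum_univ_seven]
      ring
  have hdec : ∀ x, ∃ l, x = ι l + f x • b := by
    intro x
    obtain ⟨l, hl⟩ := (hf (x - f x • b)).1 (by rw [map_sub, map_smul, hb]; simp)
    exact ⟨l, by rw [hl]; simp⟩
  -- the pairing with `w = ι δ₆` is unimodular
  obtain ⟨t, l', htl⟩ : ∃ t l' : ℤ, t * m - (2 * (n : ℤ) + 2) * l' = 1 := by
    let r : (Fin 8 → ℤ) →ₗ[ℤ] (LinearMap.range ι) :=
      (LinearMap.id - f.smulRight b).codRestrict _ (fun x => (hf _).1 (by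
        change f (x - f x • b) = 0
        rw [map_sub, map_smul, hb]; simp))
    let g : (Fin 8 → ℤ) →ₗ[ℤ] ℤ :=
      LinearMap.proj 6 ∘ₗ (LinearEquiv.ofInjective ι hi).symm.toLinearMap ∘ₗ r
    have hg : ∀ y, g (ι y) = y 6 := by
      intro y
      have : r (ι y) = LinearEquiv.ofInjective ι hi y := by
        ext1; simp [r, hfι]
      simp [g, this]
    obtain ⟨y₀, hy₀⟩ := mukai_repr g
    obtain ⟨l, hl⟩ := hdec y₀
    have h := hy₀ (ι (Pi.single 6 1))
    rw [hg, hl, mukai_add_left, mukai_smul_left, hB, hbι] at h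
    refine ⟨f y₀, l 6, ?_⟩
    simp [kummerForm] at h
    linarith
  set d : ℤ := 2 * (n : ℤ) + 2 with hd
  have hd0 : d ≠ 0 := by omega
  let w : Fin 8 → ℤ := ι (Pi.single 6 1)
  let v : Fin 8 → ℤ := m • w + d • b
  have hvι : ∀ y, mukaiForm v (ι y) = 0 := by
    intro y
    simp only [v, w, mukai_add_left, mukai_smul_left, hB, hbι]
    simp [kummerForm, ← hd]
    ring
  have hgen : ∀ x, (∀ y, mukaiForm x (ι y) = 0) → ∃ k : ℤ, x = k • v := by
    intro x hx
    obtain ⟨l, hl⟩ := hdec x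
    generalize f x = q at hl
    have key : ∀ y, kummerForm n l y + q * (m * y 6) = 0 := by
      intro y
      rw [← hx y, hl, mukai_add_left, mukai_smul_left, hB, hbι]
    have k0 := key (Pi.single 0 1)
    have k1 := key (Pi.single 1 1)
    have k2 := key (Pi.single 2 1)
    have k3 := key (Pi.single 3 1)
    have k4 := key (Pi.single 4 1)
    have k5 := key (Pi.single 5 1)
    have k6 := key (Pi.single 6 1)
    simp [kummerForm, Pi.single_apply, ← hd] at k0 k1 k2 k3 k4 k5 k6
    have hl6 : l = l 6 • Pi.single 6 1 := by
      ext i; fin_cases i <;> simp [*]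
    refine ⟨t * l 6 - q * l', ?_⟩
    have h1 : q = (t * l 6 - q * l') * d := by linear_combination (-q) * htl + t * k6
    have h2 : l 6 = (t * l 6 - q * l') * m := by linear_combination (-(l 6)) * htl + l' * k6
    have h3 : ι l = l 6 • w := by
      conv_lhs => rw [hl6, map_smul]
    rw [hl, h3]
    simp only [v, smul_add, smul_smul]
    rw [← h1, ← h2]
  have hvb : mukaiForm v b = m * m + d * mukaiForm b b := by
    simp only [v, mukai_add_left, mukai_smul_left, w]
    rw [mukai_comm _ b, hbι]; simp
  have hvv : mukaiForm v v = d * (m * m + d * mukaiForm b b) := by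
    have : mukaiForm v v = m * mukaiForm v w + d * mukaiForm v b := by
      conv_lhs => rw [mukai_comm]
      rw [mukai_comm v w, mukai_comm v b, ← mukai_smul_left, ← mukai_smul_left, ← mukai_add_left]
    rw [this, hvb, show mukaiForm v w = 0 from hvι _]; ring
  have hD : m * m + d * mukaiForm b b = 1 := by
    obtain ⟨u, hu⟩ := mukai_repr f
    obtain ⟨s, hs'⟩ := hgen u (fun y => by rw [hu, hfι])
    have h1 := hu b
    rw [hb, hs', mukai_smul_left, hvb] at h1
    obtain ⟨c, hc⟩ := mukai_even b
    rcases Int.eq_one_or_neg_one_of_mul_eq_one (by rw [mul_comm]; exact h1 :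
      (m * m + d * mukaiForm b b) * s = 1) with h | h
    · exact h
    · exfalso
      rw [hc, hd] at h
      have h4 : m * m = 4 * (-((n + 1) * c)) - 1 := by linear_combination h
      rcases Int.even_or_odd' m with ⟨a, ha | ha⟩
      · have : 4 * (a * a) = m * m := by rw [ha]; ring
        omega
      · have : 4 * (a * a + a) + 1 = m * m := by rw [ha]; ring
        omega
  rw [hD, mul_one] at hvv
  refine ⟨v, ?_, hvv, fun x => ⟨hgen x, ?_⟩⟩
  · have hdvd : ∀ i, Finset.univ.gcd v ∣ v i := fun i => Finset.gcd_dvd (Finset.mem_univ i)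
    choose z hz using hdvd
    have hvz : v = Finset.univ.gcd v • z := by ext i; simpa using hz i
    have hnn : Finset.univ.gcd v = normalize (Finset.univ.gcd v) := Finset.normalize_gcd.symm
    unfold IsPrimitive
    generalize Finset.univ.gcd v = g at hvz hnn
    have hg0 : g ≠ 0 := by
      rintro rfl
      rw [hvz, mukai_smul_left] at hvv
      simp at hvv; exact hd0 hvv.symm
    obtain ⟨k, hk⟩ := hgen z (fun y => by
      have := hvι y
      rw [hvz, mukai_smul_left] at this
      exact (mul_eq_zero.1 this).resolve_left hg0)
    have h1 : mukaiForm v v = g * k * mukaiForm v v := by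
      conv_lhs => rw [hvz, hk]
      rw [mukai_smul_left, mukai_smul_left, ← hk, ← hvz]; ring
    rw [hvv] at h1
    have h2 : g * k = 1 := by
      apply mul_right_cancel₀ hd0; linarith
    rw [hnn]
    exact normalize_eq_one.2 (IsUnit.of_mul_eq_one _ h2)
  · rintro ⟨k, rfl⟩ y
    rw [mukai_smul_left, hvι, mul_zero]
end

section
/- Let n ≥ 1, let ι : Λ_n → Λ̃ be a primitive isometric embedding of the generalized Kummer lattice into the Mukai lattice, let v be a generator of the rank-1 orthogonal complement ι(Λ_n)^⊥, and let α ∈ Λ_n be primitive isotropic with d = Div(α). Then there exists an integer b with gcd(d,b) = 1 such that ι(α) − b·v ∈ d·Λ̃, i.e. (ι(α) − b·v)/d is an integral element of the Mukai lattice. -/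
/-- A map with saturated image is split injective. -/
theorem exists_retraction (ι : (Fin 7 → ℤ) →ₗ[ℤ] (Fin 8 → ℤ)) (hinj : Function.Injective ι)
    (hsat : ∀ (k : ℤ) (x : Fin 8 → ℤ), k ≠ 0 → k • x ∈ LinearMap.range ι →
      x ∈ LinearMap.range ι) :
    ∃ r : (Fin 8 → ℤ) →ₗ[ℤ] (Fin 7 → ℤ), r ∘ₗ ι = LinearMap.id := by
  have : Module.IsTorsionFree ℤ ((Fin 8 → ℤ) ⧸ LinearMap.range ι) := by
    rw [Module.isTorsionFree_iff_smul_eq_zero]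
    intro k q h
    by_cases hk : k = 0
    · exact Or.inl hk
    right
    obtain ⟨x, rfl⟩ := Submodule.mkQ_surjective _ q
    rw [← map_smul, Submodule.mkQ_apply, Submodule.Quotient.mk_eq_zero] at h
    rw [Submodule.mkQ_apply, Submodule.Quotient.mk_eq_zero]
    exact hsat k x hk h
  have : Module.Free ℤ ((Fin 8 → ℤ) ⧸ LinearMap.range ι) :=
    Module.free_of_finite_type_torsion_free'
  obtain ⟨s, hs⟩ := Module.projective_lifting_property (LinearMap.range ι).mkQ LinearMap.id
    (Submodule.mkQ_surjective _)
  have hex : Function.Exact ι (LinearMap.range ι).mkQ := by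
    rw [LinearMap.exact_iff]; simp
  have := (Function.Exact.split_tfae' hex).out 0 1
  exact (this.1 ⟨hinj, s, hs⟩).2

/-- There exists an integer `b` coprime to `d` such that `(ι(α) - b·v)/d` is an
integral element of the Mukai lattice. -/
theorem stmt4 (n : ℕ) (hn : 1 ≤ n) (ι : (Fin 7 → ℤ) →ₗ[ℤ] (Fin 8 → ℤ))
    (hι : IsPrimitiveIsometricEmbedding n ι) (v : Fin 8 → ℤ)
    (hv : ∀ x : Fin 8 → ℤ, (∀ y, mukaiForm x (ι y) = 0) ↔ ∃ k : ℤ, x = k • v)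
    (α : Fin 7 → ℤ) (hprim : IsPrimitive α) (hiso : kummerForm n α α = 0)
    (d : ℤ) (hd : IsDivisibility (kummerForm n) α d) :
    ∃ b : ℤ, IsCoprime d b ∧ ∃ w : Fin 8 → ℤ, ι α - b • v = d • w := by
  obtain ⟨hinj, hiso', hsat⟩ := hι
  obtain ⟨r, hr⟩ := exists_retraction ι hinj hsat
  have hri : ∀ y, r (ι y) = y := fun y => LinearMap.congr_fun hr y
  obtain ⟨hd0, hdvd, -⟩ := hd
  choose φ hφ using hdvd
  have hd0' : d ≠ 0 := hd0.ne'
  let Φ : (Fin 7 → ℤ) →ₗ[ℤ] ℤ :=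
    { toFun := φ
      map_add' := by
        intro x y
        apply mul_left_cancel₀ hd0'
        rw [mul_add, ← hφ, ← hφ, ← hφ]
        simp only [kummerForm, Pi.add_apply]; ring
      map_smul' := by
        intro c x
        apply mul_left_cancel₀ hd0'
        simp only [RingHom.id_apply, smul_eq_mul]
        rw [mul_left_comm, ← hφ, ← hφ]
        simp only [kummerForm, Pi.smul_apply, smul_eq_mul]; ring }
  let f : (Fin 8 → ℤ) →ₗ[ℤ] ℤ := Φ ∘ₗ r
  let e : Fin 8 → ℤ := fun i => f (Pi.single i 1)
  let w : Fin 8 → ℤ := ![e 1, e 0, e 3, e 2, e 5, e 4, e 7, e 6]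
  have hw : ∀ x, mukaiForm w x = f x := by
    intro x
    rw [LinearMap.pi_apply_eq_sum_univ f x]
    have : ∀ i : Fin 8, f (fun j => if i = j then 1 else 0) = e i := by
      intro i
      congr 1
      funext j
      simp [Pi.single_apply, eq_comm]
    simp only [this, Fin.sum_univ_eight, smul_eq_mul]
    simp [mukaiForm, w]
    ring
  obtain ⟨b, hb⟩ := (hv (ι α - d • w)).1 (by
    intro y
    have h1 : mukaiForm (ι α - d • w) (ι y) = mukaiForm (ι α) (ι y) - d * mukaiForm w (ι y) := by
      simp only [mukaiForm, Pi.sub_apply, Pi.smul_apply, smul_eq_mul]; ring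
    have h2 : f (ι y) = φ y := by
      change φ (r (ι y)) = φ y
      rw [hri]
    rw [h1, hw, hiso', h2, hφ y, sub_self])
  have hα : ι α = b • v + d • w := by rw [← hb]; abel
  refine ⟨b, ?_, w, by rw [hα]; abel⟩
  rw [Int.isCoprime_iff_gcd_eq_one]
  obtain ⟨d', hd'⟩ := Int.gcd_dvd_left d b
  obtain ⟨b', hb'⟩ := Int.gcd_dvd_right d b
  have hg0 : (Int.gcd d b : ℤ) ≠ 0 := by
    intro h
    rw [h, zero_mul] at hd'
    exact hd0' hd'
  generalize Int.gcd d b = g at *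
  have hz : ι α = (g : ℤ) • (b' • v + d' • w) := by
    rw [hα, smul_add, smul_smul, smul_smul, ← hd', ← hb']
  obtain ⟨x, hx⟩ := hsat g (b' • v + d' • w) hg0 ⟨α, hz⟩
  have hαx : α = (g : ℤ) • x := by
    apply hinj
    rw [map_smul, hx, hz]
  have h1 : (g : ℤ) ∣ 1 := by
    have hp : Finset.univ.gcd α = 1 := hprim
    rw [← hp]
    apply Finset.dvd_gcd
    intro i _
    rw [hαx]
    exact ⟨x i, rfl⟩
  have h2 : g ∣ 1 := by exact_mod_cast h1
  exact Nat.dvd_one.1 h2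
end

section
/- Let n ≥ 1 and let α be a primitive isotropic element of the generalized Kummer lattice Λ_n. Then there exists u ∈ Λ_n with (u,α) = 0 and (u,u) = 2, and there exists u' ∈ Λ_n with (u',α) = 0 and (u',u') = −2. -/
/-- There is an integral matrix of determinant `e` orthogonal to `(a, b, c, d)`. -/
def OrthSol (e a b c d : ℤ) : Prop :=
  ∃ p q r s : ℤ, p * a + q * b + r * c + s * d = 0 ∧ p * s - q * r = e

theorem OrthSol.col {e a b c d : ℤ} (k : ℤ) (h : OrthSol e a (b - k * a) c (d - k * c)) :
    OrthSol e a b c d := by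
  obtain ⟨p, q, r, s, h1, h2⟩ := h
  exact ⟨p - k * q, q, r - k * s, s, by linear_combination h1, by linear_combination h2⟩

theorem OrthSol.rot {e a b c d : ℤ} (h : OrthSol e b (-a) d (-c)) : OrthSol e a b c d := by
  obtain ⟨p, q, r, s, h1, h2⟩ := h
  exact ⟨-q, p, -s, r, by linear_combination h1, by linear_combination h2⟩

theorem OrthSol.transpose {e a b c d : ℤ} (h : OrthSol e a c b d) : OrthSol e a b c d := by
  obtain ⟨p, q, r, s, h1, h2⟩ := h
  exact ⟨p, r, q, s, by linear_combination h1, by linear_combination h2⟩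

theorem OrthSol.diag (e a d : ℤ) : OrthSol e a 0 0 d :=
  ⟨0, 1, -e, 0, by ring, by ring⟩

theorem OrthSol.of_ne_zero (e : ℤ) (N : ℕ) :
    ∀ a b c d : ℤ, a ≠ 0 → a.natAbs = N → OrthSol e a b c d := by
  induction N using Nat.strong_induction_on with
  | _ N ih =>
    have key : ∀ a b c d : ℤ, a ≠ 0 → a.natAbs = N → ¬ a ∣ b → OrthSol e a b c d := by
      intro a b c d ha hN hab
      apply OrthSol.col (b / a)
      apply OrthSol.rot
      have hb : b - b / a * a = b % a := by
        have := Int.emod_add_mul_ediv b a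
        linear_combination -this
      rw [hb]
      have h0 := Int.emod_nonneg b ha
      have h1 := Int.emod_lt_abs b ha
      rw [Int.abs_eq_natAbs] at h1
      have h2 : b % a ≠ 0 := fun h => hab (Int.dvd_of_emod_eq_zero h)
      exact ih _ (by omega) _ _ _ _ h2 rfl
    intro a b c d ha hN
    by_cases hb : a ∣ b
    · by_cases hc : a ∣ c
      · obtain ⟨k, rfl⟩ := hb
        obtain ⟨l, rfl⟩ := hc
        apply OrthSol.col k
        apply OrthSol.transpose
        apply OrthSol.col l
        have e1 : a * k - k * a = 0 := by ring
        have e2 : a * l - l * a = 0 := by ring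
        rw [e1, e2]
        exact OrthSol.diag _ _ _
      · exact (key a c b d ha hN hc).transpose
    · exact key a b c d ha hN hb

theorem OrthSol.all (e a b c d : ℤ) : OrthSol e a b c d := by
  by_cases ha : a = 0
  · by_cases hb : b = 0
    · by_cases hc : c = 0
      · subst ha hb hc
        exact OrthSol.diag _ _ _
      · exact (OrthSol.rot (OrthSol.of_ne_zero e _ _ _ _ _ hc rfl)).transpose
    · exact OrthSol.rot (OrthSol.of_ne_zero e _ _ _ _ _ hb rfl)
  · exact OrthSol.of_ne_zero e _ _ _ _ _ ha rfl

theorem exists_orth (n : ℕ) (α : Fin 7 → ℤ) (e : ℤ) :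
    ∃ u : Fin 7 → ℤ, kummerForm n u α = 0 ∧ kummerForm n u u = 2 * e := by
  obtain ⟨p, q, r, s, h1, h2⟩ := OrthSol.all e (α 1) (α 3) (-α 2) (α 0)
  refine ⟨![p, s, q, -r, 0, 0, 0], ?_, ?_⟩
  · have : kummerForm n ![p, s, q, -r, 0, 0, 0] α = p * α 1 + s * α 0 + q * α 3 + (-r) * α 2
        + 0 * α 5 + 0 * α 4 - (2 * (n : ℤ) + 2) * (0 * α 6) := rfl
    rw [this]
    linear_combination h1
  · have : kummerForm n ![p, s, q, -r, 0, 0, 0] ![p, s, q, -r, 0, 0, 0] =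
        p * s + s * p + q * (-r) + (-r) * q
        + 0 * 0 + 0 * 0 - (2 * (n : ℤ) + 2) * (0 * 0) := rfl
    rw [this]
    linear_combination 2 * h2

/-- For every primitive isotropic `α` in the generalized Kummer lattice there are
`u, u'` orthogonal to `α` with `(u,u) = 2` and `(u',u') = -2`. -/
theorem stmt7 (n : ℕ) (hn : 1 ≤ n) (α : Fin 7 → ℤ)
    (hprim : IsPrimitive α) (hiso : kummerForm n α α = 0) :
    (∃ u : Fin 7 → ℤ, kummerForm n u α = 0 ∧ kummerForm n u u = 2) ∧
      (∃ u' : Fin 7 → ℤ, kummerForm n u' α = 0 ∧ kummerForm n u' u' = -2) := by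
  exact ⟨by simpa using exists_orth n α 1, by simpa using exists_orth n α (-1)⟩
end

section
/- Let n ≥ 1 and d > 0 with d² dividing n + 1, and let j₁, j₂ : L_{n,d} → Λ̃ be two primitive isometric embeddings of the degenerate lattice L_{n,d} into the Mukai lattice. Then there exists an isometry g of Λ̃ (a ℤ-linear automorphism of ℤ⁸ preserving the Mukai form) such that j₂ = g ∘ j₁. -/
/-- The involution exchanging the two isotropic basis vectors in every hyperbolic plane. -/
def sg : Fin 8 → Fin 8 := ![1, 0, 3, 2, 5, 4, 7, 6]

lemma sg_sg : ∀ i, sg (sg i) = i := by decide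
lemma sg_ne : ∀ i, sg i ≠ i := by decide

/-- Elementary transvection. -/
def tv (i j : Fin 8) (t : ℤ) (x : Fin 8 → ℤ) : Fin 8 → ℤ := fun k =>
  x k + (if k = j then t * x i else 0) - (if k = sg i then t * x (sg j) else 0)

lemma tv_inv (i j : Fin 8) (h : i ≠ j) (h' : j ≠ sg i) (t : ℤ) (x : Fin 8 → ℤ) :
    tv i j (-t) (tv i j t x) = x := by
  have h1 : sg j ≠ sg i := fun e => h (by rw [← sg_sg i, ← e, sg_sg])
  have h2 := sg_ne j
  have h3 := (sg_ne i).symm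
  funext k
  simp only [tv, if_neg h, if_neg h1, if_neg h2, if_neg h3]
  split_ifs <;> ring

/-- Elementary transvection as a linear automorphism. -/
def tvE (i j : Fin 8) (h : i ≠ j) (h' : j ≠ sg i) (t : ℤ) : (Fin 8 → ℤ) ≃ₗ[ℤ] (Fin 8 → ℤ) where
  toFun := tv i j t
  invFun := tv i j (-t)
  left_inv := tv_inv i j h h' t
  right_inv := fun x => by simpa using tv_inv i j h h' (-t) x
  map_add' := fun x y => by
    funext k
    simp only [tv, Pi.add_apply]
    split_ifs <;> ring
  map_smul' := fun c x => by
    funext k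
    simp only [tv, Pi.smul_apply, smul_eq_mul, RingHom.id_apply]
    split_ifs <;> ring

lemma mukai_sum (x y : Fin 8 → ℤ) : mukaiForm x y = ∑ k, x k * y (sg k) := by
  simp [mukaiForm, Fin.sum_univ_succ, sg]
  have e : (Fin.succ (5:Fin 7)) = 6 := rfl
  ring_nf
  try rfl

set_option maxHeartbeats 2000000 in
lemma tv_iso (i j : Fin 8) (h : i ≠ j) (h' : j ≠ sg i) (t : ℤ) (x y : Fin 8 → ℤ) :
    mukaiForm (tv i j t x) (tv i j t y) = mukaiForm x y := by
  have h1 : sg j ≠ sg i := fun e => h (by rw [← sg_sg i, ← e, sg_sg])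
  have h2 := sg_ne j
  have h3 := (sg_ne i).symm
  have e1 : ∀ k, (sg k = j) ↔ (k = sg j) := fun k =>
    ⟨fun e => by rw [← e, sg_sg], fun e => by rw [e, sg_sg]⟩
  have e2 : ∀ k, (sg k = sg i) ↔ (k = i) := fun k =>
    ⟨fun e => by rw [← sg_sg k, e, sg_sg], fun e => by rw [e]⟩
  rw [mukai_sum, mukai_sum]
  simp only [tv, e1, e2]
  have key : ∀ k, (x k + (if k = j then t * x i else 0) - (if k = sg i then t * x (sg j) else 0)) *
      (y (sg k) + (if k = sg j then t * y i else 0) - (if k = i then t * y (sg j) else 0)) =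
      x k * y (sg k) + (if k = j then t * x i * y (sg j) else 0)
       - (if k = sg i then t * x (sg j) * y i else 0) + (if k = sg j then t * y i * x (sg j) else 0)
       - (if k = i then t * y (sg j) * x i else 0) := by
    intro k
    by_cases c1 : k = j
    · subst c1
      simp [h', h.symm, h2.symm]; ring
    by_cases c2 : k = sg i
    · subst c2
      simp [h'.symm, h1.symm, sg_ne, sg_sg]; ring
    by_cases c3 : k = sg j
    · subst c3
      have : sg j ≠ i := fun e => h' (by rw [← e, sg_sg])
      simp [h1, h2, this, sg_sg]; ring
    by_cases c4 : k = i
    · subst c4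
      simp [c1, c2, c3]; ring
    simp [c1, c2, c3, c4]
  simp only [key, Finset.sum_add_distrib, Finset.sum_sub_distrib, Finset.sum_ite_eq',
    Finset.mem_univ, if_true]
  ring

lemma tv_at (i j : Fin 8) (h' : j ≠ sg i) (t : ℤ) (x : Fin 8 → ℤ) :
    tv i j t x j = x j + t * x i := by
  simp [tv, h']

lemma tv_off (i j k : Fin 8) (h : k ≠ j) (h' : k ≠ sg i) (t : ℤ) (x : Fin 8 → ℤ) :
    tv i j t x k = x k := by
  simp [tv, h, h']

/-- Reduction of an orbit closed under transvections to normal form. -/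
lemma reduce (S : Finset (Fin 8)) (p : Fin 8) (hp : p ∈ S) (hS : ∀ i ∈ S, sg i ∈ S)
    (hbig : ∀ i ∈ S, ∃ j ∈ S, j ≠ i ∧ j ≠ sg i ∧ j ≠ p ∧ j ≠ sg p)
    (P : (Fin 8 → ℤ) → Prop) (x : Fin 8 → ℤ) (hx : P x)
    (hmove : ∀ z i j t, i ∈ S → j ∈ S → i ≠ j → j ≠ sg i → P z → P (tv i j t z))
    (hprim : ∀ z, P z → ∀ k : ℤ, (∀ i ∈ S, k ∣ z i) → k ∣ 1) :
    ∃ z, P z ∧ z p = 1 ∧ ∀ j ∈ S, j ≠ p → j ≠ sg p → z j = 0 := by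
  classical
  have hne : ∃ m : ℕ, ∃ z i, P z ∧ i ∈ S ∧ z i ≠ 0 ∧ (z i).natAbs = m := by
    by_contra hcon
    push Not at hcon
    have : (0:ℤ) ∣ 1 := hprim x hx 0 (fun i hi => by
      by_contra h0
      exact hcon _ x i hx hi (fun h => h0 (by rw [h])) rfl)
    norm_num at this
  obtain ⟨z, i, hz, hi, hzi, hm⟩ := Nat.find_spec hne
  have hmin : ∀ z' i', P z' → i' ∈ S → z' i' ≠ 0 → (z i).natAbs ≤ (z' i').natAbs := by
    intro z' i' h1 h2 h3
    rw [hm]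
    exact Nat.find_min' hne ⟨z', i', h1, h2, h3, rfl⟩
  have hdvd : ∀ z', P z' → z' i = z i → ∀ j ∈ S, j ≠ i → j ≠ sg i → z i ∣ z' j := by
    intro z' hz' he j hj h1 h2
    by_contra hnd
    have hr : tv i j (-(z' j / z i)) z' j = z' j % z i := by
      rw [tv_at _ _ h2, he]
      have := Int.emod_add_mul_ediv (z' j) (z i)
      linarith
    have h3 := hmin _ j (hmove z' i j (-(z' j / z i)) hi hj h1.symm h2 hz')
      hj (by rw [hr]; exact fun h => hnd (Int.dvd_of_emod_eq_zero h))
    rw [hr] at h3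
    have h4 := Int.emod_nonneg (z' j) hzi
    have h5 := Int.emod_lt_abs (z' j) hzi
    rw [Int.abs_eq_natAbs] at h5
    generalize z' j % z i = r at h3 h4 h5
    omega
  obtain ⟨j, hj, hji, hjsi, -, -⟩ := hbig i hi
  have hsji : sg j ≠ i := fun e => hjsi (by rw [← e, sg_sg])
  have hsjsi : sg j ≠ sg i := fun e => hji (by rw [← sg_sg j, e, sg_sg])
  -- clear coordinate `sg j`
  obtain ⟨q, hq⟩ := hdvd z hz rfl (sg j) (hS j hj) hsji hsjsi
  obtain ⟨z', hz', hz'i, hz'j⟩ : ∃ z', P z' ∧ z' i = z i ∧ z' (sg j) = 0 := by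
    refine ⟨tv i (sg j) (-q) z, hmove _ _ _ _ hi (hS j hj) hsji.symm hsjsi hz, ?_, ?_⟩
    · exact tv_off _ _ _ hsji.symm (sg_ne i).symm _ _
    · rw [tv_at _ _ hsjsi, hq]; ring
  have hall : ∀ k ∈ S, z i ∣ z' k := by
    intro k hk
    by_cases h1 : k = i
    · rw [h1, hz'i]
    by_cases h2 : k = sg i
    · subst h2
      have hjssi : j ≠ sg (sg i) := by rwa [sg_sg]
      have h3 : tv (sg i) j 1 z' i = z i := by
        rw [← hz'i]
        simp [tv, sg_sg, hji.symm, hz'j]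
      have h4 := hdvd _ (hmove z' (sg i) j 1 hk hj hjsi.symm hjssi hz') h3 j hj hji hjsi
      rw [tv_at _ _ hjssi, one_mul] at h4
      exact (dvd_add_right (hdvd z' hz' hz'i j hj hji hjsi)).1 h4
    exact hdvd z' hz' hz'i k hk h1 h2
  have hunit : z i ∣ 1 := hprim z' hz' _ hall
  obtain ⟨r, hr⟩ := hunit
  clear hall hdvd hq hji hjsi hsji hsjsi hz'j
  obtain ⟨j, hj, hji, hjsi, hjp, hjsp⟩ := hbig i hi
  obtain ⟨y, hy, hyj⟩ : ∃ y, P y ∧ y j = 1 := by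
    refine ⟨_, hmove z i j ((1 - z j) * r) hi hj hji.symm hjsi hz, ?_⟩
    rw [tv_at _ _ hjsi]
    linear_combination (z j - 1) * hr
  have hpsj : p ≠ sg j := fun e => hjsp (by rw [e, sg_sg])
  obtain ⟨y', hy', hyp⟩ : ∃ y, P y ∧ y p = 1 := by
    refine ⟨_, hmove y j p (1 - y p) hj hp hjp hpsj hy, ?_⟩
    rw [tv_at _ _ hpsj, hyj]; ring
  have hT : ∀ T : Finset (Fin 8), ∃ u, P u ∧ u p = 1 ∧
      ∀ k ∈ T, k ∈ S → k ≠ p → k ≠ sg p → u k = 0 := by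
    intro T
    induction T using Finset.induction_on with
    | empty => exact ⟨y', hy', hyp, by simp⟩
    | insert a T ha ih =>
      obtain ⟨u, hu, hup, huT⟩ := ih
      by_cases hc : a ∈ S ∧ a ≠ p ∧ a ≠ sg p
      · obtain ⟨c1, c2, c3⟩ := hc
        refine ⟨_, hmove u p a (-u a) hp c1 c2.symm c3 hu, ?_, ?_⟩
        · rw [tv_off _ _ _ c2.symm (sg_ne p).symm, hup]
        · intro k hk k1 k2 k3
          by_cases hka : k = a
          · rw [hka, tv_at _ _ c3, hup]; ring
          · rw [tv_off _ _ _ hka k3]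
            exact huT k (Finset.mem_of_mem_insert_of_ne hk hka) k1 k2 k3
      · refine ⟨u, hu, hup, ?_⟩
        intro k hk k1 k2 k3
        have hka : k ≠ a := fun e => hc (e ▸ ⟨k1, k2, k3⟩)
        exact huT k (Finset.mem_of_mem_insert_of_ne hk hka) k1 k2 k3
  obtain ⟨u, hu, hup, huT⟩ := hT Finset.univ
  exact ⟨u, hu, hup, fun k => huT k (Finset.mem_univ k)⟩

lemma prim_aux (j : (Fin 2 → ℤ) →ₗ[ℤ] (Fin 8 → ℤ)) (hj : Function.Injective j)
    (hprim : ∀ (k : ℤ) (x : Fin 8 → ℤ), k ≠ 0 → k • x ∈ LinearMap.range j →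
      x ∈ LinearMap.range j) (u : Fin 2 → ℤ) (k : ℤ) (x : Fin 8 → ℤ) (h : j u = k • x) :
    ∃ y, u = k • y := by
  by_cases hk : k = 0
  · subst hk
    refine ⟨0, hj ?_⟩
    simpa using h
  · obtain ⟨y, hy⟩ := hprim k x hk ⟨u, h⟩
    refine ⟨y, hj ?_⟩
    rw [h, map_smul, hy]

lemma normal_form (m : ℤ) (j : (Fin 2 → ℤ) →ₗ[ℤ] (Fin 8 → ℤ)) (hj : Function.Injective j)
    (hiso : ∀ x y, mukaiForm (j x) (j y) = 2 * m * (x 0 * y 0))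
    (hprim : ∀ (k : ℤ) (x : Fin 8 → ℤ), k ≠ 0 → k • x ∈ LinearMap.range j →
      x ∈ LinearMap.range j) :
    ∃ g : (Fin 8 → ℤ) ≃ₗ[ℤ] (Fin 8 → ℤ), (∀ x y, mukaiForm (g x) (g y) = mukaiForm x y) ∧
      g (j ![0, 1]) = ![1, 0, 0, 0, 0, 0, 0, 0] ∧ g (j ![1, 0]) = ![0, 0, 1, m, 0, 0, 0, 0] := by
  obtain ⟨z, ⟨g, hg, hgz⟩, hz0, hz⟩ := reduce Finset.univ 0 (by simp) (by simp) (by decide)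
    (fun z => ∃ g : (Fin 8 → ℤ) ≃ₗ[ℤ] (Fin 8 → ℤ),
      (∀ x y, mukaiForm (g x) (g y) = mukaiForm x y) ∧ g (j ![0, 1]) = z)
    (j ![0, 1]) ⟨LinearEquiv.refl ℤ _, fun _ _ => rfl, rfl⟩
    (by
      rintro z a b t - - hab hab' ⟨g, hg, rfl⟩
      exact ⟨g.trans (tvE a b hab hab' t), fun x y => (tv_iso a b hab hab' t _ _).trans (hg x y),
        rfl⟩)
    (by
      rintro z ⟨g, hg, rfl⟩ k hk
      choose f hf using fun i => hk i (Finset.mem_univ i)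
      have h1 : g (j ![0, 1]) = k • f := funext fun i => by rw [hf i]; rfl
      have h2 : j ![0, 1] = k • g.symm f := by
        rw [← map_smul, ← h1, LinearEquiv.symm_apply_apply]
      obtain ⟨y, hy⟩ := prim_aux j hj hprim _ _ _ h2
      exact ⟨y 1, by simpa using congrFun hy 1⟩)
  have hzz : z = ![1, 0, 0, 0, 0, 0, 0, 0] := by
    have h2 := hz 2 (by simp) (by decide) (by decide)
    have h3 := hz 3 (by simp) (by decide) (by decide)
    have h4 := hz 4 (by simp) (by decide) (by decide)
    have h5 := hz 5 (by simp) (by decide) (by decide)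
    have h6 := hz 6 (by simp) (by decide) (by decide)
    have h7 := hz 7 (by simp) (by decide) (by decide)
    have h1 : z 1 = 0 := by
      have := (hg (j ![0, 1]) (j ![0, 1])).trans (hiso _ _)
      rw [hgz] at this
      simp [mukaiForm, hz0, h2, h3, h4, h5, h6, h7] at this
      omega
    funext k
    fin_cases k <;> simp [*]
  rw [hzz] at hgz
  clear hzz hz hz0 z
  obtain ⟨z, ⟨g', hg', hgw, hgz'⟩, hz2, hz⟩ := reduce {2, 3, 4, 5, 6, 7} 2 (by decide)
    (by decide) (by decide)
    (fun z => ∃ g : (Fin 8 → ℤ) ≃ₗ[ℤ] (Fin 8 → ℤ),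
      (∀ x y, mukaiForm (g x) (g y) = mukaiForm x y) ∧
        g (j ![0, 1]) = ![1, 0, 0, 0, 0, 0, 0, 0] ∧ g (j ![1, 0]) = z)
    (g (j ![1, 0])) ⟨g, hg, hgz, rfl⟩
    (by
      rintro z a b t ha hb hab hab' ⟨g, hg, hgw, rfl⟩
      refine ⟨g.trans (tvE a b hab hab' t),
        fun x y => (tv_iso a b hab hab' t _ _).trans (hg x y), ?_, rfl⟩
      change tv a b t (g (j ![0, 1])) = _
      rw [hgw]
      have q : ∀ i ∈ ({2, 3, 4, 5, 6, 7} : Finset (Fin 8)),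
        (![1, 0, 0, 0, 0, 0, 0, 0] : Fin 8 → ℤ) i = 0 := by decide
      have q' : ∀ i ∈ ({2, 3, 4, 5, 6, 7} : Finset (Fin 8)),
        (![1, 0, 0, 0, 0, 0, 0, 0] : Fin 8 → ℤ) (sg i) = 0 := by decide
      funext k
      simp only [tv, q a ha, q' b hb]
      simp)
    (by
      rintro z ⟨g, hg, hgw, rfl⟩ k hk
      have hv1 : g (j ![1, 0]) 1 = 0 := by
        have := (hg (j ![1, 0]) (j ![0, 1])).trans (hiso _ _)
        rw [hgw] at this
        simpa [mukaiForm] using this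
      have hk' : ∀ i, k ∣ (g (j ![1, 0]) - g (j ![1, 0]) 0 • g (j ![0, 1])) i := by
        intro i
        rw [hgw]
        have q := hk i
        fin_cases i <;> simp_all
      choose f hf using hk'
      have h1 : g (j (![1, 0] - g (j ![1, 0]) 0 • ![0, 1])) = k • f := by
        rw [map_sub, map_sub, map_smul, map_smul]
        exact funext fun i => by rw [hf i]; rfl
      have h2 : j (![1, 0] - g (j ![1, 0]) 0 • ![0, 1]) = k • g.symm f := by
        rw [← map_smul, ← h1, LinearEquiv.symm_apply_apply]
      obtain ⟨y, hy⟩ := prim_aux j hj hprim _ _ _ h2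
      exact ⟨y 0, by simpa using congrFun hy 0⟩)
  have h1 : z 1 = 0 := by
    have := (hg' (j ![1, 0]) (j ![0, 1])).trans (hiso _ _)
    rw [hgw, hgz'] at this
    simpa [mukaiForm] using this
  have h4 := hz 4 (by decide) (by decide) (by decide)
  have h5 := hz 5 (by decide) (by decide) (by decide)
  have h6 := hz 6 (by decide) (by decide) (by decide)
  have h7 := hz 7 (by decide) (by decide) (by decide)
  have h3 : z 3 = m := by
    have := (hg' (j ![1, 0]) (j ![1, 0])).trans (hiso _ _)
    rw [hgz'] at this
    simp [mukaiForm, hz2, h1, h4, h5, h6, h7] at this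
    omega
  refine ⟨g'.trans (tvE 2 0 (by decide) (by decide) (-z 0)),
    fun x y => (tv_iso 2 0 (by decide) (by decide) _ _ _).trans (hg' x y), ?_, ?_⟩
  · change tv 2 0 (-z 0) (g' (j ![0, 1])) = _
    rw [hgw]
    funext k
    fin_cases k <;> simp [tv, sg]
  · change tv 2 0 (-z 0) (g' (j ![1, 0])) = _
    rw [hgz']
    funext k
    fin_cases k <;> simp [tv, sg, *]

/-- Any two primitive isometric embeddings of the degenerate lattice `L_{n,d}`
(`ℤ²` with Gram matrix `c·[[1,0],[0,0]]`, `c = (2n+2)/d²`) into the Mukai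
lattice differ by an isometry of the Mukai lattice. -/
theorem stmt9 (n : ℕ) (hn : 1 ≤ n) (d : ℤ) (hd : 0 < d)
    (hdiv : d ^ 2 ∣ (n : ℤ) + 1) (c : ℤ) (hc : c * d ^ 2 = 2 * ((n : ℤ) + 1))
    (j₁ j₂ : (Fin 2 → ℤ) →ₗ[ℤ] (Fin 8 → ℤ))
    (hj₁ : Function.Injective j₁)
    (hj₁iso : ∀ x y, mukaiForm (j₁ x) (j₁ y) = c * (x 0 * y 0))
    (hj₁prim : ∀ (k : ℤ) (x : Fin 8 → ℤ), k ≠ 0 → k • x ∈ LinearMap.range j₁ →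
      x ∈ LinearMap.range j₁)
    (hj₂ : Function.Injective j₂)
    (hj₂iso : ∀ x y, mukaiForm (j₂ x) (j₂ y) = c * (x 0 * y 0))
    (hj₂prim : ∀ (k : ℤ) (x : Fin 8 → ℤ), k ≠ 0 → k • x ∈ LinearMap.range j₂ →
      x ∈ LinearMap.range j₂) :
    ∃ g : (Fin 8 → ℤ) ≃ₗ[ℤ] (Fin 8 → ℤ),
      (∀ x y, mukaiForm (g x) (g y) = mukaiForm x y) ∧ ∀ x, g (j₁ x) = j₂ x := by
  obtain ⟨m, hm⟩ : ∃ m, c = 2 * m := by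
    obtain ⟨m, hm⟩ := hdiv
    refine ⟨m, ?_⟩
    have : d ^ 2 ≠ 0 := by positivity
    apply mul_right_cancel₀ this
    rw [hc, hm]; ring
  subst hm
  obtain ⟨g₁, h₁, hw₁, hv₁⟩ := normal_form m j₁ hj₁ hj₁iso hj₁prim
  obtain ⟨g₂, h₂, hw₂, hv₂⟩ := normal_form m j₂ hj₂ hj₂iso hj₂prim
  refine ⟨g₁.trans g₂.symm, fun x y => ?_, fun x => ?_⟩
  · rw [← h₂]
    simp [h₁]
  · have hx : x = x 0 • ![1, 0] + x 1 • ![0, 1] := by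
      funext k
      fin_cases k <;> simp
    rw [LinearEquiv.trans_apply, LinearEquiv.symm_apply_eq, hx]
    simp only [map_add, map_smul, hw₁, hv₁, hw₂, hv₂]
end

section
/- Let n ≥ 1, let d > 0 with d² dividing n + 1, and let b be an integer with gcd(d,b) = 1. Then there exists a primitive isotropic element α of the generalized Kummer lattice Λ_n with Div(α) = d of the form α = d·ξ + b·δ, where ξ is a primitive element of the U^{⊕3} summand. -/
/-- For `d > 0` with `d² ∣ n+1` and `b` coprime to `d`, there exists a primitive
isotropic `α ∈ Λ_n` of divisibility `d` of the form `α = d·ξ + b·δ` with `ξ`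
primitive in the `U^{⊕3}` summand (here `δ` is the seventh basis vector). -/
theorem stmt11 (n : ℕ) (hn : 1 ≤ n) (d b : ℤ) (hd : 0 < d)
    (hdiv : d ^ 2 ∣ (n : ℤ) + 1) (hcop : IsCoprime d b) :
    ∃ α ξ : Fin 7 → ℤ,
      IsPrimitive α ∧ kummerForm n α α = 0 ∧
      IsDivisibility (kummerForm n) α d ∧
      IsPrimitive ξ ∧ ξ 6 = 0 ∧
      α = d • ξ + b • (fun i => if i = 6 then 1 else 0) := by
  obtain ⟨c, hc⟩ := hdiv
  have prim : ∀ x : Fin 7 → ℤ, (∀ g : ℤ, (∀ i, g ∣ x i) → g ∣ 1) → IsPrimitive x := by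
    intro x hx
    unfold IsPrimitive
    have h1 := hx (Finset.univ.gcd x) (fun i => Finset.gcd_dvd (Finset.mem_univ i))
    rw [← Finset.normalize_gcd]
    exact normalize_eq_one.mpr (isUnit_of_dvd_one h1)
  refine ⟨![d, d * (c * b ^ 2), 0, 0, 0, 0, b], ![1, c * b ^ 2, 0, 0, 0, 0, 0],
    prim _ ?_, ?_, ⟨hd, ?_, ?_⟩, prim _ ?_, rfl, ?_⟩
  · intro g hg
    have h0 : g ∣ d := hg 0
    have h6 : g ∣ b := hg 6
    obtain ⟨u, v, huv⟩ := hcop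
    rw [← huv]
    exact dvd_add (h0.mul_left u) (h6.mul_left v)
  · change d * (d * (c * b ^ 2)) + d * (c * b ^ 2) * d + 0 * 0 + 0 * 0 + 0 * 0 + 0 * 0
      - (2 * (n : ℤ) + 2) * (b * b) = 0
    linear_combination (-2 * b ^ 2) * hc
  · intro y
    refine ⟨y 1 + c * b ^ 2 * y 0 - 2 * d * c * (b * y 6), ?_⟩
    change d * y 1 + d * (c * b ^ 2) * y 0 + 0 * y 3 + 0 * y 2 + 0 * y 5 + 0 * y 4
      - (2 * (n : ℤ) + 2) * (b * y 6) = _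
    linear_combination (-2 * b * y 6) * hc
  · intro e he
    have h := he ![0, 1, 0, 0, 0, 0, 0]
    have h2 : kummerForm n ![d, d * (c * b ^ 2), 0, 0, 0, 0, b] ![0, 1, 0, 0, 0, 0, 0] = d := by
      change d * 1 + d * (c * b ^ 2) * 0 + 0 * 0 + 0 * 0 + 0 * 0 + 0 * 0
        - (2 * (n : ℤ) + 2) * (b * 0) = d
      ring
    rwa [h2] at h
  · intro g hg
    exact hg 0
  · funext i
    fin_cases i <;> simp
end

section
/- Let n ≥ 1 and let α₁, α₂ be primitive isotropic elements of the generalized Kummer lattice Λ_n with Div(α₁) = Div(α₂) = d. Write α_i = d·ξ_i + b_i·δ with ξ_i primitive in the U^{⊕3} summand and b_i ∈ ℤ. If b₁ ≡ b₂ (mod d) or b₁ ≡ −b₂ (mod d), then there exists an isometry g of Λ_n (a ℤ-linear automorphism of ℤ⁷ preserving the form) with g(α₁) = α₂. -/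
/-- `KIso n g`: `g` is an isometry of the lattice. -/
def KIso (n : ℕ) (g : (Fin 7 → ℤ) ≃ₗ[ℤ] (Fin 7 → ℤ)) : Prop :=
  ∀ x y, kummerForm n (g x) (g y) = kummerForm n x y

theorem KIso.trans {n : ℕ} {g h : (Fin 7 → ℤ) ≃ₗ[ℤ] (Fin 7 → ℤ)} (hg : KIso n g)
    (hh : KIso n h) : KIso n (g.trans h) := by
  intro x y
  simp only [LinearEquiv.trans_apply]
  rw [hh, hg]

theorem KIso.symm {n : ℕ} {g : (Fin 7 → ℤ) ≃ₗ[ℤ] (Fin 7 → ℤ)} (hg : KIso n g) :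
    KIso n g.symm := by
  intro x y
  rw [← hg]
  simp

/-- The seventh basis vector. -/
def del : Fin 7 → ℤ := fun i => if i = 6 then 1 else 0

/-- Isometries of `U^3` extended by the identity. -/
def UIso (n : ℕ) (g : (Fin 7 → ℤ) ≃ₗ[ℤ] (Fin 7 → ℤ)) : Prop :=
  KIso n g ∧ (∀ x, g x 6 = x 6) ∧ g del = del

theorem UIso.trans {n : ℕ} {g h : (Fin 7 → ℤ) ≃ₗ[ℤ] (Fin 7 → ℤ)} (hg : UIso n g)
    (hh : UIso n h) : UIso n (g.trans h) := by
  refine ⟨hg.1.trans hh.1, fun x => ?_, ?_⟩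
  · simp only [LinearEquiv.trans_apply]
    rw [hh.2.1, hg.2.1]
  · simp only [LinearEquiv.trans_apply]
    rw [hg.2.2, hh.2.2]

/-- Action of `SL₂` on coordinates `0, 5` and dually on `1, 4`. -/
def mA (p q r s : ℤ) (x : Fin 7 → ℤ) : Fin 7 → ℤ :=
  ![p * x 0 + q * x 5, s * x 1 - r * x 4, x 2, x 3, p * x 4 - q * x 1, r * x 0 + s * x 5, x 6]

/-- Action of `SL₂` on coordinates `0, 3` and dually on `1, 2`. -/
def mB (p q r s : ℤ) (x : Fin 7 → ℤ) : Fin 7 → ℤ :=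
  ![p * x 0 + q * x 3, s * x 1 - r * x 2, p * x 2 - q * x 1, r * x 0 + s * x 3, x 4, x 5, x 6]

/-- Action of `SL₂` on coordinates `2, 4` and dually on `3, 5`. -/
def mC (p q r s : ℤ) (x : Fin 7 → ℤ) : Fin 7 → ℤ :=
  ![x 0, x 1, p * x 2 + q * x 4, s * x 3 - r * x 5, r * x 2 + s * x 4, p * x 5 - q * x 3, x 6]

/-- Eichler transvection. -/
def mT (a b c e : ℤ) (x : Fin 7 → ℤ) : Fin 7 → ℤ :=
  ![x 0 + a * x 4, x 1 + b * x 4, x 2 + c * x 4, x 3 + e * x 4, x 4,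
    x 5 - (b * x 0 + a * x 1 + e * x 2 + c * x 3) - (a * b + c * e) * x 4, x 6]

/-- Swap of coordinates `4, 5`. -/
def mS (x : Fin 7 → ℤ) : Fin 7 → ℤ :=
  ![x 0, x 1, x 2, x 3, x 5, x 4, x 6]

/-- Eichler transvection along `δ`. -/
def mD (n : ℕ) (k : ℤ) (x : Fin 7 → ℤ) : Fin 7 → ℤ :=
  ![x 0, x 1, x 2, x 3, x 4,
    x 5 + (2 * n + 2) * k * x 6 + (n + 1) * k ^ 2 * x 4, x 6 + k * x 4]

/-- Reflection in `δ`. -/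
def mR (x : Fin 7 → ℤ) : Fin 7 → ℤ :=
  ![x 0, x 1, x 2, x 3, x 4, x 5, - x 6]

theorem exists_equiv (f g : (Fin 7 → ℤ) → (Fin 7 → ℤ))
    (hadd : ∀ x y, f (x + y) = f x + f y) (hsmul : ∀ (c : ℤ) x, f (c • x) = c • f x)
    (hgf : ∀ x, g (f x) = x) (hfg : ∀ x, f (g x) = x) :
    ∃ e : (Fin 7 → ℤ) ≃ₗ[ℤ] (Fin 7 → ℤ), ∀ x, e x = f x :=
  ⟨{ toFun := f, invFun := g, map_add' := hadd, map_smul' := hsmul,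
     left_inv := hgf, right_inv := hfg }, fun _ => rfl⟩

theorem exA (n : ℕ) (p q r s : ℤ) (h : p * s - q * r = 1) :
    ∃ e, UIso n e ∧ ∀ x, e x = mA p q r s x := by
  obtain ⟨e, he⟩ := exists_equiv (mA p q r s) (mA s (-q) (-r) p)
    (by intro x y; ext i; fin_cases i <;> simp [mA] <;> ring)
    (by intro c x; ext i; fin_cases i <;> simp [mA] <;> ring)
    (by intro x; ext i; fin_cases i <;> simp [mA] <;> grind)
    (by intro x; ext i; fin_cases i <;> simp [mA] <;> grind)
  refine ⟨e, ⟨fun x y => ?_, fun x => ?_, ?_⟩, he⟩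
  · simp [he, kummerForm, mA]; grind
  · simp [he, mA]
  · rw [he]; ext i; fin_cases i <;> simp [mA, del]

theorem exB (n : ℕ) (p q r s : ℤ) (h : p * s - q * r = 1) :
    ∃ e, UIso n e ∧ ∀ x, e x = mB p q r s x := by
  obtain ⟨e, he⟩ := exists_equiv (mB p q r s) (mB s (-q) (-r) p)
    (by intro x y; ext i; fin_cases i <;> simp [mB] <;> ring)
    (by intro c x; ext i; fin_cases i <;> simp [mB] <;> ring)
    (by intro x; ext i; fin_cases i <;> simp [mB] <;> grind)
    (by intro x; ext i; fin_cases i <;> simp [mB] <;> grind)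
  refine ⟨e, ⟨fun x y => ?_, fun x => ?_, ?_⟩, he⟩
  · simp [he, kummerForm, mB]; grind
  · simp [he, mB]
  · rw [he]; ext i; fin_cases i <;> simp [mB, del]

theorem exC (n : ℕ) (p q r s : ℤ) (h : p * s - q * r = 1) :
    ∃ e, UIso n e ∧ ∀ x, e x = mC p q r s x := by
  obtain ⟨e, he⟩ := exists_equiv (mC p q r s) (mC s (-q) (-r) p)
    (by intro x y; ext i; fin_cases i <;> simp [mC] <;> ring)
    (by intro c x; ext i; fin_cases i <;> simp [mC] <;> ring)
    (by intro x; ext i; fin_cases i <;> simp [mC] <;> grind)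
    (by intro x; ext i; fin_cases i <;> simp [mC] <;> grind)
  refine ⟨e, ⟨fun x y => ?_, fun x => ?_, ?_⟩, he⟩
  · simp [he, kummerForm, mC]; grind
  · simp [he, mC]
  · rw [he]; ext i; fin_cases i <;> simp [mC, del]

theorem exT (n : ℕ) (a b c d : ℤ) :
    ∃ e, UIso n e ∧ ∀ x, e x = mT a b c d x := by
  obtain ⟨e, he⟩ := exists_equiv (mT a b c d) (mT (-a) (-b) (-c) (-d))
    (by intro x y; ext i; fin_cases i <;> simp [mT] <;> ring)
    (by intro c x; ext i; fin_cases i <;> simp [mT] <;> ring)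
    (by intro x; ext i; fin_cases i <;> simp [mT]; ring)
    (by intro x; ext i; fin_cases i <;> simp [mT]; ring)
  refine ⟨e, ⟨fun x y => ?_, fun x => ?_, ?_⟩, he⟩
  · simp [he, kummerForm, mT]; ring
  · simp [he, mT]
  · rw [he]; ext i; fin_cases i <;> simp [mT, del]

theorem exS (n : ℕ) : ∃ e, UIso n e ∧ ∀ x, e x = mS x := by
  obtain ⟨e, he⟩ := exists_equiv mS mS
    (by intro x y; ext i; fin_cases i <;> simp [mS])
    (by intro c x; ext i; fin_cases i <;> simp [mS])
    (by intro x; ext i; fin_cases i <;> simp [mS])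
    (by intro x; ext i; fin_cases i <;> simp [mS])
  refine ⟨e, ⟨fun x y => ?_, fun x => ?_, ?_⟩, he⟩
  · simp [he, kummerForm, mS]; ring
  · simp [he, mS]
  · rw [he]; ext i; fin_cases i <;> simp [mS, del]

theorem exD (n : ℕ) (k : ℤ) : ∃ e, KIso n e ∧ ∀ x, e x = mD n k x := by
  obtain ⟨e, he⟩ := exists_equiv (mD n k) (mD n (-k))
    (by intro x y; ext i; fin_cases i <;> simp [mD] <;> ring)
    (by intro c x; ext i; fin_cases i <;> simp [mD] <;> ring)
    (by intro x; ext i; fin_cases i <;> simp [mD]; ring)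
    (by intro x; ext i; fin_cases i <;> simp [mD]; ring)
  refine ⟨e, fun x y => ?_, he⟩
  simp [he, kummerForm, mD]; ring

theorem exR (n : ℕ) : ∃ e, KIso n e ∧ ∀ x, e x = mR x := by
  obtain ⟨e, he⟩ := exists_equiv mR mR
    (by intro x y; ext i; fin_cases i <;> simp [mR]; ring)
    (by intro c x; ext i; fin_cases i <;> simp [mR])
    (by intro x; ext i; fin_cases i <;> simp [mR])
    (by intro x; ext i; fin_cases i <;> simp [mR])
  refine ⟨e, fun x y => ?_, he⟩
  simp [he, kummerForm, mR]

theorem bez (u v : ℤ) : ∃ p q r s : ℤ, p * s - q * r = 1 ∧ r * u + s * v = 0 := by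
  by_cases h : Int.gcd u v = 0
  · rw [Int.gcd_eq_zero_iff] at h
    exact ⟨1, 0, 0, 1, by norm_num, by simp [h.1, h.2]⟩
  · obtain ⟨u', hu⟩ := Int.gcd_dvd_left u v
    obtain ⟨v', hv⟩ := Int.gcd_dvd_right u v
    have hb := Int.gcd_eq_gcd_ab u v
    generalize (Int.gcdA u v) = p at hb
    generalize (Int.gcdB u v) = q at hb
    have hg : ((Int.gcd u v : ℕ) : ℤ) ≠ 0 := by exact_mod_cast h
    generalize ((Int.gcd u v : ℕ) : ℤ) = g at *
    refine ⟨p, q, -v', u', ?_, ?_⟩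
    · apply mul_left_cancel₀ hg
      linear_combination -hb - p * hu - q * hv
    · linear_combination u' * hv - v' * hu

theorem gcd_comb {ι : Type*} [DecidableEq ι] (s : Finset ι) (f : ι → ℤ) :
    ∃ c : ι → ℤ, ∑ i ∈ s, c i * f i = s.gcd f := by
  obtain ⟨c, hc⟩ := s.gcd_eq_sum_mul f
  exact ⟨c, by simp [hc, mul_comm]⟩

theorem normal_form_s12 (n : ℕ) (x y : Fin 7 → ℤ) (hx : x 6 = 0) (hxy : kummerForm n x y = 1) :
    ∃ e, UIso n e ∧ ∃ m : ℤ, e x = ![0, 0, 0, 0, 1, m, 0] := by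
  obtain ⟨p, q, r, s, h1, h2⟩ := bez (x 0) (x 5)
  obtain ⟨e1, i1, f1⟩ := exA n p q r s h1
  have hx1 : e1 x 5 = 0 := by rw [f1]; simpa [mA] using h2
  obtain ⟨p, q, r, s, h1, h2⟩ := bez (e1 x 0) (e1 x 3)
  obtain ⟨e2, i2, f2⟩ := exB n p q r s h1
  have i12 := i1.trans i2
  have hx2 : e2 (e1 x) 5 = 0 := by rw [f2]; simpa [mB] using hx1
  have hx2' : e2 (e1 x) 3 = 0 := by rw [f2]; simpa [mB] using h2
  obtain ⟨p, q, r, s, h1, h2⟩ := bez (e2 (e1 x) 2) (e2 (e1 x) 4)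
  obtain ⟨e3, i3, f3⟩ := exC n p q r s h1
  have i123 := i12.trans i3
  have hx3 : e3 (e2 (e1 x)) 5 = 0 := by rw [f3]; simp [mC, hx2, hx2']
  have hx4 : e3 (e2 (e1 x)) 4 = 0 := by rw [f3]; simpa [mC] using h2
  have hx6 : e3 (e2 (e1 x)) 6 = 0 := by rw [i3.2.1, i2.2.1, i1.2.1, hx]
  have hy : kummerForm n (e3 (e2 (e1 x))) (e3 (e2 (e1 y))) = 1 := by
    rw [i3.1, i2.1, i1.1, hxy]
  generalize hz : e3 (e2 (e1 x)) = z at *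
  generalize e3 (e2 (e1 y)) = w at *
  simp only [kummerForm, hx3, hx4, hx6] at hy
  obtain ⟨e4, i4, f4⟩ := exT n (-w 0) (-w 1) (-w 2) (-w 3)
  obtain ⟨e5, i5, f5⟩ := exS n
  obtain ⟨e6, i6, f6⟩ := exT n (-z 0) (-z 1) (-z 2) (-z 3)
  refine ⟨_, ((i123.trans i4).trans i5).trans i6,
    (z 1 * z 0 + z 0 * z 1 + z 3 * z 2 + z 2 * z 3) - (z 0 * z 1 + z 2 * z 3), ?_⟩
  simp only [LinearEquiv.trans_apply, hz]
  have h5 : e5 (e4 z) = ![z 0, z 1, z 2, z 3, 1, 0, 0] := by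
    rw [f5, f4]
    ext i; fin_cases i <;> simp [mS, mT, hx3, hx4, hx6]
    linear_combination hy
  rw [h5, f6]
  ext i; fin_cases i <;> simp [mT]
  ring

theorem prim_pair (n : ℕ) (x : Fin 7 → ℤ) (hx : x 6 = 0) (hp : IsPrimitive x) :
    ∃ y, kummerForm n x y = 1 := by
  obtain ⟨c, hc⟩ := gcd_comb Finset.univ x
  rw [hp] at hc
  refine ⟨![c 1, c 0, c 3, c 2, c 5, c 4, 0], ?_⟩
  rw [Fin.sum_univ_seven, hx] at hc
  simp [kummerForm]
  linear_combination hc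

theorem nf_alpha (n : ℕ) (d b : ℤ) (x : Fin 7 → ℤ) (hx : x 6 = 0) (hp : IsPrimitive x) :
    ∃ e, KIso n e ∧ ∃ m : ℤ, e (d • x + b • (fun i => if i = 6 then 1 else 0)) =
      ![0, 0, 0, 0, d, m, b] := by
  obtain ⟨y, hy⟩ := prim_pair n x hx hp
  obtain ⟨e, he, m, hm⟩ := normal_form_s12 n x y hx hy
  refine ⟨e, he.1, d * m, ?_⟩
  change e (d • x + b • del) = _
  rw [map_add, map_smul, map_smul, hm, he.2.2]
  ext i; fin_cases i <;> simp [del]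

theorem stmt12 (n : ℕ) (hn : 1 ≤ n) (d : ℤ)
    (α₁ α₂ ξ₁ ξ₂ : Fin 7 → ℤ) (b₁ b₂ : ℤ)
    (h1p : IsPrimitive α₁) (h2p : IsPrimitive α₂)
    (h1i : kummerForm n α₁ α₁ = 0) (h2i : kummerForm n α₂ α₂ = 0)
    (h1d : IsDivisibility (kummerForm n) α₁ d)
    (h2d : IsDivisibility (kummerForm n) α₂ d)
    (hξ₁p : IsPrimitive ξ₁) (hξ₁ : ξ₁ 6 = 0)
    (hξ₂p : IsPrimitive ξ₂) (hξ₂ : ξ₂ 6 = 0)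
    (hα₁ : α₁ = d • ξ₁ + b₁ • (fun i => if i = 6 then 1 else 0))
    (hα₂ : α₂ = d • ξ₂ + b₂ • (fun i => if i = 6 then 1 else 0))
    (hcong : d ∣ b₁ - b₂ ∨ d ∣ b₁ + b₂) :
    ∃ g : (Fin 7 → ℤ) ≃ₗ[ℤ] (Fin 7 → ℤ),
      (∀ x y, kummerForm n (g x) (g y) = kummerForm n x y) ∧ g α₁ = α₂ := by
  have hd : d ≠ 0 := h1d.1.ne'
  obtain ⟨e1, i1, m1, f1⟩ := nf_alpha n d b₁ ξ₁ hξ₁ hξ₁p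
  obtain ⟨e2, i2, m2, f2⟩ := nf_alpha n d b₂ ξ₂ hξ₂ hξ₂p
  rw [← hα₁] at f1
  rw [← hα₂] at f2
  have key : ∃ e, KIso n e ∧ ∃ m : ℤ, e (e1 α₁) = ![0, 0, 0, 0, d, m, b₂] := by
    rw [f1]
    rcases hcong with ⟨k, hk⟩ | ⟨k, hk⟩
    · obtain ⟨e, he, f⟩ := exD n (-k)
      refine ⟨e, he, mD n (-k) ![0, 0, 0, 0, d, m1, b₁] 5, ?_⟩
      rw [f]
      ext i; fin_cases i <;> simp [mD]
      linear_combination hk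
    · obtain ⟨e, he, f⟩ := exD n (-k)
      obtain ⟨e', he', f'⟩ := exR n
      refine ⟨e.trans e', he.trans he', mD n (-k) ![0, 0, 0, 0, d, m1, b₁] 5, ?_⟩
      rw [LinearEquiv.trans_apply, f, f']
      ext i; fin_cases i <;> simp [mD, mR]
      linear_combination -hk
  obtain ⟨e, he, m, hm⟩ := key
  have h1 : kummerForm n (e (e1 α₁)) (e (e1 α₁)) = 0 := by rw [he, i1, h1i]
  have h2 : kummerForm n (e2 α₂) (e2 α₂) = 0 := by rw [i2, h2i]
  rw [hm] at h1
  rw [f2] at h2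
  simp [kummerForm] at h1 h2
  have hmm : m = m2 := by
    apply mul_left_cancel₀ (mul_ne_zero two_ne_zero hd)
    linear_combination h1 - h2
  refine ⟨(e1.trans e).trans e2.symm, (i1.trans he).trans i2.symm, ?_⟩
  simp only [LinearEquiv.trans_apply]
  rw [hm, hmm, ← f2, LinearEquiv.symm_apply_apply]
end

section
/- Let b₂ ≥ 3 and let B be a symmetric bilinear form on ℝ^{b₂} of signature (3, b₂−3), i.e. there is a linear isomorphism of ℝ^{b₂} carrying B to the diagonal form with three entries +1 and b₂−3 entries −1. Let W ⊆ ℝ^{b₂} be a 3-dimensional linear subspace on which B is positive definite, and let C̃ = {x ∈ ℝ^{b₂} : B(x,x) > 0}. Then the inclusion W \ {0} ↪ C̃ is a homotopy equivalence (W \ {0} is a deformation retract of C̃). -/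
/-- Let `B` be a symmetric bilinear form on `ℝ^{b₂}` of signature `(3, b₂-3)`
(exhibited by a linear automorphism `φ` diagonalizing `B` with three `+1`'s and
`b₂-3` many `-1`'s), let `W` be a 3-dimensional subspace on which `B` is
positive definite and let `C̃ = {x : B(x,x) > 0}`. Then the inclusion
`W \ {0} ↪ C̃` is a homotopy equivalence. -/
theorem stmt14 (b₂ : ℕ) (hb : 3 ≤ b₂)
    (B : (Fin b₂ → ℝ) → (Fin b₂ → ℝ) → ℝ)
    (φ : (Fin b₂ → ℝ) ≃ₗ[ℝ] (Fin b₂ → ℝ))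
    (hB : ∀ x y, B x y =
      ∑ i : Fin b₂, (if (i : ℕ) < 3 then (1 : ℝ) else -1) * (φ x i * φ y i))
    (W : Submodule ℝ (Fin b₂ → ℝ)) (hW : Module.finrank ℝ W = 3)
    (hpos : ∀ x ∈ W, x ≠ 0 → 0 < B x x) :
    ∃ H : ContinuousMap.HomotopyEquiv
        (((W : Set (Fin b₂ → ℝ)) \ {0} : Set (Fin b₂ → ℝ)))
        ({x : Fin b₂ → ℝ | 0 < B x x}),
      ∀ x, (H.toFun x).1 = x.1 := by
  classical
  let π : (Fin b₂ → ℝ) →ₗ[ℝ] (Fin 3 → ℝ) :=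
    (LinearMap.funLeft ℝ ℝ (Fin.castLE hb)) ∘ₗ φ.toLinearMap
  have hπ : ∀ x y, π x = π y → ∀ i : Fin b₂, (i : ℕ) < 3 → φ x i = φ y i := by
    intro x y h i hi
    exact congrFun h ⟨i, hi⟩
  have hneg : ∀ x, π x = 0 → B x x ≤ 0 := by
    intro x hx
    rw [hB]
    apply Finset.sum_nonpos
    intro i _
    split_ifs with hi
    · have := hπ x 0 (by simpa using hx) i hi
      simp [this]
    · nlinarith [mul_self_nonneg (φ x i)]
  have hinj : Function.Injective (π ∘ₗ W.subtype) := by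
    rw [← LinearMap.ker_eq_bot, LinearMap.ker_eq_bot']
    intro w hw
    by_contra hne
    have h1 := hpos w.1 w.2 (fun h => hne (Subtype.ext h))
    exact absurd (hneg w.1 hw) (not_le.mpr h1)
  let e : W ≃ₗ[ℝ] (Fin 3 → ℝ) :=
    LinearEquiv.ofInjectiveOfFinrankEq (π ∘ₗ W.subtype) hinj (by simp [hW])
  have he : ∀ w : W, e w = π w.1 := fun w => rfl
  let Q : (Fin b₂ → ℝ) →ₗ[ℝ] (Fin b₂ → ℝ) := W.subtype ∘ₗ e.symm.toLinearMap ∘ₗ π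
  have hQW : ∀ x, Q x ∈ W := fun x => (e.symm (π x)).2
  have hQπ : ∀ x, π (Q x) = π x := by
    intro x
    have := he (e.symm (π x))
    rw [LinearEquiv.apply_symm_apply] at this
    exact this.symm
  have hQid : ∀ w ∈ W, Q w = w := by
    intro w hw
    have : e.symm (π w) = ⟨w, hw⟩ := by
      rw [LinearEquiv.symm_apply_eq, he]
    exact congrArg Subtype.val this
  have hQc : Continuous Q := Q.continuous_of_finiteDimensional
  have hQ0 : ∀ x, 0 < B x x → Q x ≠ 0 := by
    intro x hx h
    have h1 : π x = 0 := by rw [← hQπ x, h, map_zero]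
    exact absurd (hneg x h1) (not_le.mpr hx)
  have hconv : ∀ x, ∀ t : ℝ, 0 ≤ t → t ≤ 1 → 0 < B x x →
      0 < B ((1 - t) • Q x + t • x) ((1 - t) • Q x + t • x) := by
    intro x t ht0 ht1 hx
    have hq := hpos (Q x) (hQW x) (hQ0 x hx)
    have key : (1 - t) * B (Q x) (Q x) + t * B x x ≤
        B ((1 - t) • Q x + t • x) ((1 - t) • Q x + t • x) := by
      rw [hB, hB, hB, Finset.mul_sum, Finset.mul_sum, ← Finset.sum_add_distrib]
      apply Finset.sum_le_sum
      intro i _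
      simp only [map_add, map_smul, Pi.add_apply, Pi.smul_apply, smul_eq_mul]
      split_ifs with hi
      · rw [hπ _ _ (hQπ x) i hi]
        apply le_of_eq
        ring
      · nlinarith [mul_nonneg (mul_nonneg ht0 (sub_nonneg.mpr ht1))
          (mul_self_nonneg (φ (Q x) i - φ x i))]
    rcases eq_or_lt_of_le ht0 with h | h
    · subst h
      simpa using hq
    · have := mul_pos h hx
      have := mul_nonneg (sub_nonneg.mpr ht1) hq.le
      linarith
  let ι : C(((W : Set (Fin b₂ → ℝ)) \ {0} : Set (Fin b₂ → ℝ)),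
      {x : Fin b₂ → ℝ | 0 < B x x}) :=
    ⟨fun x => ⟨x.1, hpos x.1 x.2.1 x.2.2⟩, by fun_prop⟩
  let r : C({x : Fin b₂ → ℝ | 0 < B x x},
      ((W : Set (Fin b₂ → ℝ)) \ {0} : Set (Fin b₂ → ℝ))) :=
    ⟨fun x => ⟨Q x.1, hQW x.1, hQ0 x.1 x.2⟩, by fun_prop⟩
  have h1 : r.comp ι = ContinuousMap.id _ := by
    ext1 x
    exact Subtype.ext (hQid x.1 x.2.1)
  let K : ContinuousMap.Homotopy (ι.comp r) (ContinuousMap.id _) :=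
    { toFun := fun p => ⟨(1 - (p.1 : ℝ)) • Q p.2.1 + (p.1 : ℝ) • p.2.1,
        hconv p.2.1 p.1 p.1.2.1 p.1.2.2 p.2.2⟩
      continuous_toFun := by fun_prop
      map_zero_left := by
        intro x
        apply Subtype.ext
        simp [ι, r]
      map_one_left := by
        intro x
        apply Subtype.ext
        simp }
  exact ⟨⟨ι, r, h1 ▸ ContinuousMap.Homotopic.refl _, ⟨K⟩⟩, fun x => rfl⟩
end

section
/- Let n ≥ 1, let ι : Λ_n → Λ̃ be a primitive isometric embedding of the generalized Kummer lattice into the Mukai lattice, let v be a generator of the rank-1 orthogonal complement ι(Λ_n)^⊥, and let g be an isometry of Λ_n for which there exists an isometry g̃ of Λ̃ with ι ∘ g = g̃ ∘ ι. Then for every primitive isotropic α ∈ Λ_n there exists a group isomorphism h : H(α,ι) → H(g(α),ι) preserving the restricted bilinear forms such that h(v) = v or h(v) = −v. -/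
/-- The saturation of the subgroup of `ℤ^m` generated by a set `s`:
all `x` with `k • x` in the span of `s` for some nonzero integer `k`. -/
def satSpan {m : ℕ} (s : Set (Fin m → ℤ)) : Submodule ℤ (Fin m → ℤ) where
  carrier := {x | ∃ k : ℤ, k ≠ 0 ∧ k • x ∈ Submodule.span ℤ s}
  add_mem' := by
    rintro x y ⟨k, hk, hkx⟩ ⟨l, hl, hly⟩
    refine ⟨k * l, mul_ne_zero hk hl, ?_⟩
    have h : (k * l) • (x + y) = l • (k • x) + k • (l • y) := by
      rw [smul_add, mul_comm k l, mul_smul, mul_comm l k, mul_smul]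
    rw [h]
    exact Submodule.add_mem _ (Submodule.smul_mem _ _ hkx)
      (Submodule.smul_mem _ _ hly)
  zero_mem' := ⟨1, one_ne_zero, by simp⟩
  smul_mem' := by
    rintro c x ⟨k, hk, hkx⟩
    exact ⟨k, hk, by rw [smul_comm]; exact Submodule.smul_mem _ c hkx⟩


/-- A linear map sending `s` into the span of `t` sends `satSpan s` into `satSpan t`. -/
theorem satSpan_map_mem {m : ℕ} {s t : Set (Fin m → ℤ)}
    (f : (Fin m → ℤ) →ₗ[ℤ] (Fin m → ℤ))
    (hf : ∀ x ∈ s, f x ∈ Submodule.span ℤ t) {x : Fin m → ℤ}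
    (hx : x ∈ satSpan s) : f x ∈ satSpan t := by
  obtain ⟨k, hk, hkx⟩ := hx
  refine ⟨k, hk, ?_⟩
  have h : Submodule.span ℤ s ≤ (Submodule.span ℤ t).comap f :=
    Submodule.span_le.2 hf
  rw [← map_smul]
  exact h hkx

theorem mem_satSpan {m : ℕ} {s : Set (Fin m → ℤ)} {x : Fin m → ℤ} (hx : x ∈ s) :
    x ∈ satSpan s :=
  ⟨1, one_ne_zero, by rw [one_smul]; exact Submodule.subset_span hx⟩

/-- If `g` is an isometry of `Λ_n` that extends along `ι` to an isometry `g̃` of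
the Mukai lattice (`ι ∘ g = g̃ ∘ ι`), and `v` generates `ι(Λ_n)^⊥`, then for
every primitive isotropic `α ∈ Λ_n` there is an isomorphism
`H(α,ι) → H(g(α),ι)` preserving the restricted forms and fixing `v` up to sign. -/
theorem stmt18 (n : ℕ) (hn : 1 ≤ n)
    (ι : (Fin 7 → ℤ) →ₗ[ℤ] (Fin 8 → ℤ))
    (hι : IsPrimitiveIsometricEmbedding n ι)
    (v : Fin 8 → ℤ)
    (hv : ∀ x : Fin 8 → ℤ, (∀ y, mukaiForm x (ι y) = 0) ↔ ∃ k : ℤ, x = k • v)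
    (g : (Fin 7 → ℤ) ≃ₗ[ℤ] (Fin 7 → ℤ))
    (hgiso : ∀ x y, kummerForm n (g x) (g y) = kummerForm n x y)
    (gt : (Fin 8 → ℤ) ≃ₗ[ℤ] (Fin 8 → ℤ))
    (hgt : ∀ x y, mukaiForm (gt x) (gt y) = mukaiForm x y)
    (hcomp : ∀ x, ι (g x) = gt (ι x))
    (α : Fin 7 → ℤ) (hprim : IsPrimitive α) (hiso : kummerForm n α α = 0) :
    ∃ (hm₁ : v ∈ satSpan {ι α, v}) (hm₂ : v ∈ satSpan {ι (g α), v})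
      (h : satSpan {ι α, v} ≃ₗ[ℤ] satSpan {ι (g α), v}),
      (∀ x y : satSpan {ι α, v}, mukaiForm (h x).1 (h y).1 =
        mukaiForm x.1 y.1) ∧
      (h ⟨v, hm₁⟩ = ⟨v, hm₂⟩ ∨ h ⟨v, hm₁⟩ = -⟨v, hm₂⟩) := by
  have h0 : ∀ y, mukaiForm v (ι y) = 0 := (hv v).2 ⟨1, by simp⟩
  obtain ⟨k, hk⟩ := (hv (gt v)).1 (by
    intro y
    have := hcomp (g.symm y)
    rw [LinearEquiv.apply_symm_apply] at this
    rw [this, hgt, h0])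
  obtain ⟨l, hl⟩ := (hv (gt.symm v)).1 (by
    intro y
    rw [← hgt, LinearEquiv.apply_symm_apply, ← hcomp, h0])
  have hkl : (l * k) • v = v := by
    have := congrArg gt hl
    rw [LinearEquiv.apply_symm_apply, map_smul, hk, smul_smul] at this
    exact this.symm
  have hsign : gt v = v ∨ gt v = -v := by
    by_cases hv0 : v = 0
    · left; rw [hv0, map_zero]
    · have h1 : l * k = 1 := by
        obtain ⟨i, hi⟩ := Function.ne_iff.1 hv0
        have := congrFun hkl i
        simp only [Pi.smul_apply, smul_eq_mul] at this
        exact mul_right_cancel₀ hi (by rw [this, one_mul])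
      rcases Int.isUnit_iff.1 (IsUnit.of_mul_eq_one l (by rw [mul_comm]; exact h1) : IsUnit k)
        with h | h
      · left; rw [hk, h, one_smul]
      · right; rw [hk, h, neg_one_smul]
  have e1 : ∀ x ∈ ({ι α, v} : Set (Fin 8 → ℤ)),
      gt.toLinearMap x ∈ Submodule.span ℤ {ι (g α), v} := by
    rintro x (rfl | rfl)
    · exact Submodule.subset_span (Or.inl (hcomp α).symm)
    · rw [LinearEquiv.coe_coe, hk]
      exact Submodule.smul_mem _ _ (Submodule.subset_span (Or.inr rfl))
  have e2 : ∀ x ∈ ({ι (g α), v} : Set (Fin 8 → ℤ)),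
      gt.symm.toLinearMap x ∈ Submodule.span ℤ {ι α, v} := by
    rintro x (rfl | rfl)
    · rw [LinearEquiv.coe_coe, hcomp, LinearEquiv.symm_apply_apply]
      exact Submodule.subset_span (Or.inl rfl)
    · rw [LinearEquiv.coe_coe, hl]
      exact Submodule.smul_mem _ _ (Submodule.subset_span (Or.inr rfl))
  have hmap : (satSpan {ι α, v}).map (gt : (Fin 8 → ℤ) →ₗ[ℤ] (Fin 8 → ℤ))
      = satSpan {ι (g α), v} := by
    ext x
    constructor
    · rintro ⟨y, hy, rfl⟩
      exact satSpan_map_mem _ e1 hy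
    · intro hx
      exact ⟨gt.symm x, satSpan_map_mem gt.symm.toLinearMap e2 hx, by simp⟩
  refine ⟨mem_satSpan (Or.inr rfl), mem_satSpan (Or.inr rfl),
    gt.ofSubmodules _ _ hmap, ?_, ?_⟩
  · intro x y
    exact hgt x.1 y.1
  · rcases hsign with h | h
    · exact Or.inl (Subtype.ext h)
    · exact Or.inr (Subtype.ext h)
end

section
/- Let x be a primitive element of the lattice U^{⊕3} with (x,x) = 2k for an integer k. Then there exists an isometry g of U^{⊕3} (a ℤ-linear automorphism of ℤ⁶ preserving the form) such that g(x) = (1, k, 0, 0, 0, 0), i.e. g(x) = e + k·f where (e,f) is the standard basis of the first hyperbolic summand. -/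
/-- The hyperbolic form of `U^{⊕3}`, as a bilinear form on `ℤ⁶`. -/
def hypForm3 (x y : Fin 6 → ℤ) : ℤ :=
  x 0 * y 1 + x 1 * y 0 + x 2 * y 3 + x 3 * y 2 + x 4 * y 5 + x 5 * y 4

/-- Two vectors are in the same orbit of the isometry group. -/
def Rel19 (x y : Fin 6 → ℤ) : Prop :=
  ∃ g : (Fin 6 → ℤ) ≃ₗ[ℤ] (Fin 6 → ℤ),
    (∀ a b, hypForm3 (g a) (g b) = hypForm3 a b) ∧ g x = y

theorem Rel19.trans {x y z : Fin 6 → ℤ} (h : Rel19 x y) (h' : Rel19 y z) : Rel19 x z := by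
  obtain ⟨g, hg, rfl⟩ := h
  obtain ⟨g', hg', rfl⟩ := h'
  exact ⟨g.trans g', fun a b => by simp [hg, hg'], rfl⟩

theorem Rel19.refl (x : Fin 6 → ℤ) : Rel19 x x :=
  ⟨LinearEquiv.refl ℤ _, fun a b => rfl, rfl⟩

/-- The Eichler transvection as a plain function. -/
def eich (t s p q : ℤ) (x : Fin 6 → ℤ) : Fin 6 → ℤ :=
  ![x 0, x 1 + t * x 3 + s * x 2 + p * x 5 + q * x 4 - (t * s + p * q) * x 0,
    x 2 - t * x 0, x 3 - s * x 0, x 4 - p * x 0, x 5 - q * x 0]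

theorem eich_inv (t s p q : ℤ) (x : Fin 6 → ℤ) :
    eich (-t) (-s) (-p) (-q) (eich t s p q x) = x := by
  ext i
  fin_cases i <;> simp [eich] <;> ring

theorem rel_eich (t s p q : ℤ) (x : Fin 6 → ℤ) : Rel19 x (eich t s p q x) := by
  refine ⟨{ toFun := eich t s p q
            invFun := eich (-t) (-s) (-p) (-q)
            map_add' := ?_
            map_smul' := ?_
            left_inv := eich_inv t s p q
            right_inv := ?_ }, ?_, rfl⟩
  · intro a b
    ext i
    fin_cases i <;> simp [eich] <;> ring
  · intro a b
    ext i
    fin_cases i <;> simp [eich] <;> ring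
  · intro a
    simpa using eich_inv (-t) (-s) (-p) (-q) a
  · intro a b
    simp [eich, hypForm3]
    ring

theorem rel_neg (x : Fin 6 → ℤ) : Rel19 x (-x) :=
  ⟨LinearEquiv.neg ℤ, fun a b => by simp [hypForm3], rfl⟩

theorem rel_perm (σ : Equiv.Perm (Fin 6))
    (h : ∀ a b : Fin 6 → ℤ, hypForm3 (a ∘ σ) (b ∘ σ) = hypForm3 a b) (x : Fin 6 → ℤ) :
    Rel19 x (x ∘ σ) :=
  ⟨LinearEquiv.funCongrLeft ℤ ℤ σ, h, rfl⟩

theorem rel_swap01 (x : Fin 6 → ℤ) : Rel19 x ![x 1, x 0, x 2, x 3, x 4, x 5] := by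
  convert rel_perm (Equiv.swap 0 1) ?_ x using 1
  · ext i
    fin_cases i <;> rfl
  · intro a b
    change a 1 * b 0 + a 0 * b 1 + a 2 * b 3 + a 3 * b 2 + a 4 * b 5 + a 5 * b 4 = _
    unfold hypForm3
    ring

theorem rel_swap02 (x : Fin 6 → ℤ) : Rel19 x ![x 2, x 3, x 0, x 1, x 4, x 5] := by
  convert rel_perm (Equiv.swap 0 2 * Equiv.swap 1 3) ?_ x using 1
  · ext i
    fin_cases i <;> rfl
  · intro a b
    change a 2 * b 3 + a 3 * b 2 + a 0 * b 1 + a 1 * b 0 + a 4 * b 5 + a 5 * b 4 = _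
    unfold hypForm3
    ring

theorem rel_swap04 (x : Fin 6 → ℤ) : Rel19 x ![x 4, x 5, x 2, x 3, x 0, x 1] := by
  convert rel_perm (Equiv.swap 0 4 * Equiv.swap 1 5) ?_ x using 1
  · ext i
    fin_cases i <;> rfl
  · intro a b
    change a 4 * b 5 + a 5 * b 4 + a 2 * b 3 + a 3 * b 2 + a 0 * b 1 + a 1 * b 0 = _
    unfold hypForm3
    ring

/-- Any coordinate can be moved to position `0`. -/
theorem rel_coord (x : Fin 6 → ℤ) (i : Fin 6) : ∃ y, Rel19 x y ∧ y 0 = x i := by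
  fin_cases i
  · exact ⟨x, Rel19.refl x, rfl⟩
  · exact ⟨_, rel_swap01 x, rfl⟩
  · exact ⟨_, rel_swap02 x, rfl⟩
  · exact ⟨_, (rel_swap02 x).trans (rel_swap01 _), rfl⟩
  · exact ⟨_, rel_swap04 x, rfl⟩
  · exact ⟨_, (rel_swap04 x).trans (rel_swap01 _), rfl⟩

/-- Eichler's criterion for `U^{⊕3}`: a primitive `x` with `(x,x) = 2k` is
mapped by some isometry of `U^{⊕3}` to `e + k·f = (1,k,0,0,0,0)`. -/
theorem stmt19 (x : Fin 6 → ℤ) (hprim : IsPrimitive x)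
    (k : ℤ) (hx : hypForm3 x x = 2 * k) :
    ∃ g : (Fin 6 → ℤ) ≃ₗ[ℤ] (Fin 6 → ℤ),
      (∀ a b, hypForm3 (g a) (g b) = hypForm3 a b) ∧
      g x = ![1, k, 0, 0, 0, 0] := by
  classical
  have hprim' : ∀ a : ℤ, (∀ i, a ∣ x i) → IsUnit a := by
    intro a ha
    have h : a ∣ Finset.univ.gcd x := Finset.dvd_gcd fun i _ => ha i
    rw [hprim] at h
    exact isUnit_of_dvd_one h
  have hex : ∃ n : ℕ, n ≠ 0 ∧ ∃ y, Rel19 x y ∧ (y 0).natAbs = n := by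
    have : ∃ i, x i ≠ 0 := by
      by_contra! h
      have := hprim' 0 (fun i => by simp [h i])
      simp at this
    obtain ⟨i, hi⟩ := this
    obtain ⟨y, hy, h0⟩ := rel_coord x i
    exact ⟨(y 0).natAbs, by simpa [h0] using hi, y, hy, rfl⟩
  obtain ⟨hn0, y, hxy, hyn⟩ := Nat.find_spec hex
  have hmin : ∀ z, Rel19 x z → z 0 ≠ 0 → (y 0).natAbs ≤ (z 0).natAbs := by
    intro z hz h0
    rw [hyn]
    exact Nat.find_min' hex ⟨by simpa using h0, z, hz, rfl⟩
  have ha0 : y 0 ≠ 0 := by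
    intro h
    apply hn0
    rw [← hyn, h]
    rfl
  -- the minimal entry divides any entry which can be reduced by a transvection
  have hdvd : ∀ z, Rel19 x z → z 0 = y 0 → ∀ i : Fin 6, 2 ≤ i → y 0 ∣ z i := by
    intro z hz h0 i hi
    have hw : Rel19 x (eich (z 2 / z 0) (z 3 / z 0) (z 4 / z 0) (z 5 / z 0) z) :=
      hz.trans (rel_eich _ _ _ _ z)
    obtain ⟨w, hw', hw0⟩ := rel_coord (eich (z 2 / z 0) (z 3 / z 0) (z 4 / z 0) (z 5 / z 0) z) i
    have hwi : w 0 = z i % z 0 := by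
      rw [hw0, Int.emod_def]
      fin_cases i
      · exact absurd hi (by decide)
      · exact absurd hi (by decide)
      all_goals simp [eich, mul_comm]
    rw [← h0]
    by_contra hnd
    have hne : w 0 ≠ 0 := by
      rw [hwi]
      exact fun h => hnd (Int.dvd_of_emod_eq_zero h)
    have h1 := hmin w (hw.trans hw') hne
    rw [← h0] at h1 ha0
    have h2 := Int.emod_nonneg (z i) ha0
    have h3 := Int.emod_lt_abs (z i) ha0
    rw [← hwi] at h2 h3
    rw [Int.abs_eq_natAbs] at h3
    omega
  obtain ⟨t, ht⟩ := hdvd y hxy rfl 2 (by decide)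
  obtain ⟨s, hs⟩ := hdvd y hxy rfl 3 (by decide)
  obtain ⟨p, hp⟩ := hdvd y hxy rfl 4 (by decide)
  obtain ⟨q, hq⟩ := hdvd y hxy rfl 5 (by decide)
  obtain ⟨b, hb⟩ : ∃ b, Rel19 x ![y 0, b, 0, 0, 0, 0] := by
    refine ⟨eich t s p q y 1, ?_⟩
    convert hxy.trans (rel_eich t s p q y) using 1
    ext i
    fin_cases i <;> simp [eich, ht, hs, hp, hq, mul_comm]
  have hab : y 0 ∣ b := by
    have h := ((hb.trans (rel_swap01 _)).trans (rel_eich 1 0 0 0 _)).trans (rel_swap01 _)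
    have h2 := hdvd _ h (by simp [eich]) 2 (by decide)
    simpa [eich] using h2
  obtain ⟨c, rfl⟩ := hab
  have hunit : IsUnit (y 0) := by
    obtain ⟨g, -, hg⟩ := hb
    apply hprim'
    have hxz : x = y 0 • g.symm ![1, c, 0, 0, 0, 0] := by
      rw [← map_smul, LinearEquiv.eq_symm_apply, hg]
      ext i
      fin_cases i <;> simp
    intro i
    rw [hxz]
    exact ⟨_, rfl⟩
  obtain ⟨m, hm⟩ : ∃ m, Rel19 x ![1, m, 0, 0, 0, 0] := by
    rcases Int.isUnit_iff.mp hunit with h | h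
    · rw [h] at hb
      exact ⟨_, hb⟩
    · rw [h] at hb
      refine ⟨c, ?_⟩
      convert hb.trans (rel_neg _) using 1
      ext i
      fin_cases i <;> simp
  obtain ⟨g, hg, hgx⟩ := hm
  refine ⟨g, hg, ?_⟩
  have h := hg x x
  rw [hgx, hx] at h
  have hmk : m = k := by
    simp [hypForm3] at h
    omega
  rw [hgx, hmk]
end
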